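/- arXiv:2510.20530 — 3 statements merged into one kernel-verified Lean document; each statement's English description precedes it below -/
import Mathlib

section
/- Fix integers d ≥ 2 and m ≥ 1 and a unit vector ψ ∈ ℂ^m ⊗ ℂ^d, and let σ_B := Tr_A(|ψ⟩⟨ψ|) be the reduced state on the ℂ^d factor. Consider bipartite single-call probabilistic protocols (S, S_ch), together with p ∈ ℝ, satisfying S ⋆ U = p · (1_m ⊗ U†)|ψ⟩⟨ψ|(1_m ⊗ U†)† for all U ∈ SU(d) (exact probabilistic unitary inversion on one part of the known bipartite pure state ψ). If d > 2, then every such protocol has p = 0. If d = 2, then the maximal p over all such protocols equals 1/(2 · λ_max(σ_B)), and it is attained. -/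
open Matrix Kronecker BigOperators ComplexOrder

noncomputable section

/-- Entrywise complex conjugate `U̅` of a matrix. -/
def mconj {d : ℕ} (U : Matrix (Fin d) (Fin d) ℂ) : Matrix (Fin d) (Fin d) ℂ :=
  U.map (starRingEnd ℂ)

/-- Rank-one outer product `|v⟩⟨v|`. -/
def outer {n : Type*} (v : n → ℂ) : Matrix n n ℂ :=
  Matrix.vecMulVec v (star v)

/-- Choi vector `|U⟩⟩ = Σ_i e_i ⊗ U e_i`. -/
def choiVec {d : ℕ} (U : Matrix (Fin d) (Fin d) ℂ) : Fin d × Fin d → ℂ :=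
  fun p => U p.2 p.1

/-- `|U⟩⟩⟨⟨U|`. -/
def choiProj {d : ℕ} (U : Matrix (Fin d) (Fin d) ℂ) :
    Matrix (Fin d × Fin d) (Fin d × Fin d) ℂ :=
  outer (choiVec U)

/-- Partial trace over the first tensor factor. -/
def ptrLeft {α β : Type*} [Fintype α] (S : Matrix (α × β) (α × β) ℂ) :
    Matrix β β ℂ :=
  fun b b' => ∑ a, S (a, b) (a, b')

/-- Partial trace over the second (last) tensor factor. -/
def ptrRight {α β : Type*} [Fintype β] (S : Matrix (α × β) (α × β) ℂ) :
    Matrix α α ℂ :=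
  fun a a' => ∑ b, S (a, b) (a', b)

/-- Action `S ⋆ U := Tr_{IO}[ S · (|U̅⟩⟩⟨⟨U̅|_{IO} ⊗ 1_{AF}) ]` of a bipartite
single-call supermap `S` on `I ⊗ O ⊗ A ⊗ F`, applied to the unitary channel `U`. -/
def actB {d m : ℕ}
    (S : Matrix ((Fin d × Fin d) × (Fin m × Fin d)) ((Fin d × Fin d) × (Fin m × Fin d)) ℂ)
    (U : Matrix (Fin d) (Fin d) ℂ) : Matrix (Fin m × Fin d) (Fin m × Fin d) ℂ :=
  ptrLeft (S * (choiProj (mconj U) ⊗ₖ (1 : Matrix (Fin m × Fin d) (Fin m × Fin d) ℂ)))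

/-- A bipartite single-call probabilistic protocol (auxiliary output dimension `m`):
`0 ≤ S ≤ S_ch` with `Tr_{AF}(S_ch) = σ ⊗ 1_d`, `σ ≥ 0`, `Tr σ = 1`. -/
def IsProtocolB {d m : ℕ}
    (S Sch : Matrix ((Fin d × Fin d) × (Fin m × Fin d)) ((Fin d × Fin d) × (Fin m × Fin d)) ℂ) :
    Prop :=
  S.PosSemidef ∧ (Sch - S).PosSemidef ∧
    ∃ σ : Matrix (Fin d) (Fin d) ℂ, σ.PosSemidef ∧ σ.trace = 1 ∧
      ptrRight Sch = σ ⊗ₖ (1 : Matrix (Fin d) (Fin d) ℂ)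

/-- Largest eigenvalue of a matrix: the supremum of the real parts of its spectrum
(for a positive semidefinite matrix this is the maximal eigenvalue, i.e. the
operator norm). -/
def lamMax {n : ℕ} (M : Matrix (Fin n) (Fin n) ℂ) : ℝ :=
  sSup (Complex.re '' spectrum ℂ M)

lemma exists_su_col {d : ℕ} (z : Fin d) (u : Fin d → ℂ) (hu : u ≠ 0) :
    ∃ V ∈ Matrix.specialUnitaryGroup (Fin d) ℂ, ∃ r : ℂ, r ≠ 0 ∧ ∀ i, u i = r * V i z := by
  classical
  set u' : EuclideanSpace ℂ (Fin d) := WithLp.toLp 2 u with hu'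
  have hu0 : u' ≠ 0 := by
    intro h
    apply hu
    have := congrArg (WithLp.ofLp) h
    simpa [hu'] using this
  have hn : (‖u'‖ : ℂ) ≠ 0 := by simpa using hu0
  set v : Fin d → EuclideanSpace ℂ (Fin d) := fun _ => ((‖u'‖ : ℂ)⁻¹) • u'
  have hv : Orthonormal ℂ (({z} : Set (Fin d)).domRestrict v) := by
    constructor
    · intro i
      change ‖((‖u'‖ : ℂ)⁻¹) • u'‖ = 1
      rw [norm_smul, norm_inv, Complex.norm_real, norm_norm]
      exact inv_mul_cancel₀ (norm_ne_zero_iff.2 hu0)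
    · intro i j hij
      exact absurd (Subsingleton.elim i j) hij
  obtain ⟨b, hb⟩ := hv.exists_orthonormalBasis_extension_of_card_eq (by simp)
  set W : Matrix (Fin d) (Fin d) ℂ := (EuclideanSpace.basisFun (Fin d) ℂ).toBasis.toMatrix b
  have hW : W ∈ Matrix.unitaryGroup (Fin d) ℂ :=
    (EuclideanSpace.basisFun (Fin d) ℂ).toMatrix_orthonormalBasis_mem_unitary b
  have hWz : ∀ i, W i z = (‖u'‖ : ℂ)⁻¹ * u i := by
    intro i
    have := hb z (by simp)
    simp [W, Module.Basis.toMatrix_apply, this, v, hu']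
  have hd0 : d ≠ 0 := by
    rintro rfl; exact z.elim0
  obtain ⟨δ, hδ⟩ := IsAlgClosed.exists_pow_nat_eq (star W.det) (Nat.pos_of_ne_zero hd0)
  have hdet := Matrix.det_of_mem_unitary hW
  have hdd : star W.det * W.det = 1 := (Unitary.mem_iff.1 hdet).1
  have hnd : ‖star W.det‖ = 1 := by
    have h2 := congrArg norm hdd
    rw [norm_mul, norm_star, norm_one] at h2
    rw [norm_star]
    nlinarith [norm_nonneg W.det]
  have hδn : ‖δ‖ = 1 := by
    have : ‖δ‖ ^ d = 1 := by rw [← norm_pow, hδ, hnd]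
    exact (pow_eq_one_iff_of_nonneg (norm_nonneg _) hd0).1 this
  have hδ0 : δ ≠ 0 := by
    intro h; simp [h] at hδn
  refine ⟨δ • W, ?_, (‖u'‖ : ℂ) * δ⁻¹, mul_ne_zero hn (inv_ne_zero hδ0), ?_⟩
  · rw [Matrix.mem_specialUnitaryGroup_iff]
    constructor
    · rw [Matrix.mem_unitaryGroup_iff']
      rw [star_smul, smul_mul_smul_comm, Matrix.mem_unitaryGroup_iff'.1 hW]
      have : star δ * δ = 1 := by
        rw [Complex.star_def, mul_comm, Complex.mul_conj, Complex.normSq_eq_norm_sq, hδn]; simp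
      rw [this, one_smul]
    · rw [Matrix.det_smul, Fintype.card_fin, hδ, hdd]
  · intro i
    simp only [Matrix.smul_apply, smul_eq_mul, hWz]
    field_simp

/-- signed permutation matrices -/
lemma monomial_mem {d : ℕ} (π : Equiv.Perm (Fin d)) (t : Fin d → ℂ) (ht : ∀ i, star (t i) * t i = 1)
    (hp : ∏ i, t i = ((Equiv.Perm.sign π : ℤ) : ℂ)) :
    (Matrix.of fun r c => if r = π c then t c else 0) ∈ Matrix.specialUnitaryGroup (Fin d) ℂ := by
  rw [Matrix.mem_specialUnitaryGroup_iff]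
  constructor
  · rw [Matrix.mem_unitaryGroup_iff']
    ext i j
    simp only [Matrix.mul_apply, Matrix.star_apply, Matrix.of_apply]
    simp only [mul_ite, mul_zero, Finset.sum_ite_eq', Finset.mem_univ, if_true, Matrix.one_apply]
    by_cases h : i = j
    · subst h; simpa using ht i
    · have : ¬ (j = i) := fun h' => h h'.symm
      simp [h, this]
  · have : (Matrix.of fun r c => if r = π c then t c else 0 : Matrix (Fin d) (Fin d) ℂ) =
        (π⁻¹).permMatrix ℂ * Matrix.diagonal t := by
      ext r c
      simp only [Matrix.mul_diagonal, Equiv.Perm.permMatrix, PEquiv.toMatrix_apply, Matrix.of_apply,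
        Equiv.toPEquiv_apply, Option.mem_def, Option.some.injEq, ite_mul, one_mul, zero_mul]
      congr 1
      simp only [Equiv.Perm.inv_eq_iff_eq]
    rw [this, Matrix.det_mul, Matrix.det_permutation, Matrix.det_diagonal, hp]
    simp only [Equiv.Perm.sign_inv]
    rw [← Int.cast_mul, ← Units.val_mul, Int.units_mul_self]
    simp

lemma lin_expand {d : ℕ} {M : Type*} [AddCommGroup M] [Module ℂ M]
    (f : Matrix (Fin d) (Fin d) ℂ →ₗ[ℂ] M)
    (U : Matrix (Fin d) (Fin d) ℂ) : f U = ∑ c, ∑ r, U r c • f (Matrix.single r c 1) := by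
  conv_lhs => rw [Matrix.matrix_eq_sum_single U]
  rw [Finset.sum_comm]
  simp only [map_sum]
  refine Finset.sum_congr rfl fun c _ => Finset.sum_congr rfl fun r _ => ?_
  rw [← map_smul]; simp [Matrix.smul_single]

lemma torus_kill {d : ℕ} (π : Equiv.Perm (Fin d)) (f : Fin d → ℂ)
    (h : ∀ t : Fin d → ℂ, (∀ i, star (t i) * t i = 1) →
      ∏ i, t i = ((Equiv.Perm.sign π : ℤ) : ℂ) → ∑ c, t c * f c = 0)
    (i j : Fin d) (hij : i ≠ j) : f i = 0 := by
  classical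
  set s : Fin d → ℂ := Pi.mulSingle i ((Equiv.Perm.sign π : ℤ) : ℂ) with hs
  have hs1 : ∀ k, star (s k) * s k = 1 := by
    intro k
    by_cases hk : k = i
    · subst hk
      simp only [hs, Pi.mulSingle_eq_same]
      rcases Int.units_eq_one_or (Equiv.Perm.sign π) with h | h <;> simp [h]
    · simp [hs, hk]
  have hsp : ∏ k, s k = ((Equiv.Perm.sign π : ℤ) : ℂ) := by
    rw [hs]; exact Fintype.prod_pi_mulSingle' _ _
  have key : ∀ ω : ℂ, star ω * ω = 1 → s i * (ω - 1) * f i + s j * (star ω - 1) * f j = 0 := by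
    intro ω hω
    have hω' : ω * star ω = 1 := by rw [mul_comm]; exact hω
    have h0 := h s hs1 hsp
    have h1 := h (fun k => s k * ((Pi.mulSingle i ω : Fin d → ℂ) k * (Pi.mulSingle j (star ω) : Fin d → ℂ) k)) ?_ ?_
    · have : ∑ k, (s k * ((Pi.mulSingle i ω : Fin d → ℂ) k * (Pi.mulSingle j (star ω) : Fin d → ℂ) k) - s k) * f k = 0 := by
        simp only [sub_mul, Finset.sum_sub_distrib]
        rw [h0, h1, sub_zero]
      rw [Finset.sum_eq_add i j hij] at this
      · simp [hij, hij.symm] at this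
        rw [← this]; simp only [Complex.star_def]; ring
      · intro k _ hk
        simp [hk.1, hk.2]
      · simp
      · simp
    · intro k
      by_cases hk : k = i
      · subst hk
        simp only [Pi.mulSingle_eq_same, Pi.mulSingle_eq_of_ne hij, mul_one, star_mul]
        linear_combination (star (s k) * s k) * hω + hs1 k
      · by_cases hk' : k = j
        · subst hk'
          simp only [Pi.mulSingle_eq_same, Pi.mulSingle_eq_of_ne hk, one_mul, star_mul, star_star]
          linear_combination (star (s k) * s k) * hω' + hs1 k
        · simpa [hk, hk'] using hs1 k
    · rw [Finset.prod_mul_distrib, Finset.prod_mul_distrib, hsp, Fintype.prod_pi_mulSingle',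
        Fintype.prod_pi_mulSingle', hω', mul_one]
  have k1 := key (-1) (by simp)
  have k2 := key Complex.I (by simp)
  simp only [Complex.star_def, Complex.conj_I, map_neg, map_one] at k1 k2
  have : s i * f i = 0 := by
    linear_combination (-Complex.I/2) * k2 + (-Complex.I/2) * (-1-Complex.I)/2 * k1 + (s i * f i) * Complex.I_sq
  rcases mul_eq_zero.1 this with h' | h'
  · have := hs1 i
    rw [h'] at this; simp at this
  · exact h'

lemma exists_perm {d : ℕ} (hd : 2 < d) (z i o j : Fin d) (h : ¬ (o = z ∧ j = i)) :
    ∃ π : Equiv.Perm (Fin d), π j = o ∧ π i ≠ z := by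
  classical
  by_cases h1 : Equiv.swap j o i = z
  · by_cases hoz : o = z
    · exfalso
      apply h
      refine ⟨hoz, ?_⟩
      have : Equiv.swap j o j = z := by simp [hoz]
      exact (Equiv.swap j o).injective (this.trans h1.symm)
    · obtain ⟨y, hy⟩ : ∃ y : Fin d, y ∉ ({z, o} : Finset (Fin d)) := by
        by_contra hcon
        push Not at hcon
        have h2 : (Finset.univ : Finset (Fin d)) ⊆ {z, o} := fun y _ => hcon y
        have h3 := Finset.card_le_card h2
        have h4 := Finset.card_le_two (a := z) (b := o)
        simp only [Finset.card_univ, Fintype.card_fin] at h3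
        omega
      simp only [Finset.mem_insert, Finset.mem_singleton, not_or] at hy
      refine ⟨Equiv.swap z y * Equiv.swap j o, ?_, ?_⟩
      · simp only [Equiv.Perm.mul_apply, Equiv.swap_apply_left]
        exact Equiv.swap_apply_of_ne_of_ne hoz (Ne.symm hy.2)
      · simp only [Equiv.Perm.mul_apply, h1, Equiv.swap_apply_left]
        exact hy.1
  · exact ⟨Equiv.swap j o, by simp, h1⟩

lemma core_big {d : ℕ} (hd : 2 < d) (z : Fin d)
    (L : Matrix (Fin d) (Fin d) ℂ →ₗ[ℂ] (Fin d → ℂ)) (c : Matrix (Fin d) (Fin d) ℂ → ℂ)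
    (h : ∀ U ∈ Matrix.specialUnitaryGroup (Fin d) ℂ, ∀ i, L U i = c U * star (U z i)) :
    ∀ U ∈ Matrix.specialUnitaryGroup (Fin d) ℂ, c U = 0 := by
  classical
  have hE : ∀ i o j, ¬ (o = z ∧ j = i) → L (Matrix.single o j 1) i = 0 := by
    intro i o j hne
    obtain ⟨π, hπ1, hπ2⟩ := exists_perm hd z i o j hne
    obtain ⟨y, hy⟩ : ∃ y : Fin d, j ≠ y := by
      have : Nontrivial (Fin d) := Fin.nontrivial_iff_two_le.2 hd.le
      exact (exists_ne j).imp fun _ h => h.symm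
    have := torus_kill π (fun k => L (Matrix.single (π k) k 1) i) ?_ j y hy
    · simpa [hπ1] using this
    · intro t ht hp
      have h1 := h _ (monomial_mem π t ht hp) i
      rw [Matrix.of_apply, if_neg (Ne.symm hπ2), star_zero, mul_zero, lin_expand] at h1
      rw [← h1]
      simp [Finset.sum_apply, Matrix.of_apply]
  have hL : ∀ U i, L U i = U z i * L (Matrix.single z i 1) i := by
    intro U i
    rw [lin_expand]
    simp only [Finset.sum_apply, Pi.smul_apply, smul_eq_mul]
    rw [Finset.sum_eq_single i, Finset.sum_eq_single z]
    · intro r _ hr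
      rw [hE i r i (fun hh => hr hh.1), mul_zero]
    · simp
    · intro k _ hk
      exact Finset.sum_eq_zero fun r _ => by rw [hE i r k (fun hh => hk hh.2), mul_zero]
    · simp
  have hk : ∀ i, L (Matrix.single z i 1) i = 0 := by
    intro i
    obtain ⟨j, hj⟩ : ∃ y : Fin d, i ≠ y := by
      have : Nontrivial (Fin d) := Fin.nontrivial_iff_two_le.2 hd.le
      exact (exists_ne i).imp fun _ h => h.symm
    have key : ∀ w : ℂ, L (Matrix.single z j 1) j * star w = w * L (Matrix.single z i 1) i := by
      intro w
      obtain ⟨V, hV, r, hr, hu⟩ := exists_su_col z (Pi.single i 1 + Pi.single j w)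
        (by intro h0; have := congrFun h0 i; simp [hj] at this)
      have hV' : star V ∈ Matrix.specialUnitaryGroup (Fin d) ℂ :=
        (star (⟨V, hV⟩ : Matrix.specialUnitaryGroup (Fin d) ℂ)).2
      have hi := h _ hV' i
      have hj' := h _ hV' j
      rw [hL] at hi hj'
      have ui := hu i
      have uj := hu j
      simp [hj, hj.symm] at ui uj
      simp only [Matrix.star_apply, star_star] at hi hj'
      have ui' : 1 = star r * star (V i z) := by rw [← star_mul', ← ui, star_one]
      have uj' : star w = star r * star (V j z) := by rw [← star_mul', ← uj]
      have hn : r * star r ≠ 0 := mul_ne_zero hr (star_ne_zero.2 hr)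
      have h5 : V i z ≠ 0 := by intro h0; simp [h0] at ui
      apply mul_left_cancel₀ h5
      apply mul_left_cancel₀ (star_ne_zero.2 h5)
      apply mul_left_cancel₀ hn
      generalize L (Matrix.single z j 1) j = kj at *
      generalize L (Matrix.single z i 1) i = ki at *
      generalize V i z = vi at *
      generalize V j z = vj at *
      rw [uj', uj]
      have e1 : vi * star vj * kj = vj * star vi * ki := by
        linear_combination vi * hj' - vj * hi
      linear_combination (r * star r * star r * star vi) * e1 + (r * star r * vj * star vi * ki) * (ui - ui')
    have k1 := key 1
    have k2 := key Complex.I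
    simp only [Complex.star_def, Complex.conj_I, map_one] at k1 k2
    linear_combination (-1/2) * k1 + (Complex.I/2) * k2 + (1/2) * (L (Matrix.single z j 1) j + L (Matrix.single z i 1) i) * Complex.I_sq
  intro U hU
  by_contra hc
  have h0 : ∀ i, U z i = 0 := by
    intro i
    have := h U hU i
    rw [hL, hk, mul_zero] at this
    rcases mul_eq_zero.1 this.symm with h' | h'
    · exact absurd h' hc
    · exact star_eq_zero.1 h'
  have h2 := (Matrix.mem_specialUnitaryGroup_iff.1 hU).2
  rw [Matrix.det_eq_zero_of_row_eq_zero z h0] at h2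
  exact zero_ne_one h2

lemma su2_mem (x y : ℂ) (h : x * star x + y * star y = 1) :
    !![x, -star y; y, star x] ∈ Matrix.specialUnitaryGroup (Fin 2) ℂ := by
  rw [Matrix.mem_specialUnitaryGroup_iff, Matrix.mem_unitaryGroup_iff']
  constructor
  · ext i j
    fin_cases i <;> fin_cases j <;>
      simp [Matrix.mul_apply, Fin.sum_univ_two, Matrix.star_apply] <;>
      simp only [Complex.star_def] at h <;> first | ring1 | linear_combination h
  · rw [Matrix.det_fin_two_of]; linear_combination h

lemma su2_form {U : Matrix (Fin 2) (Fin 2) ℂ} (hU : U ∈ Matrix.specialUnitaryGroup (Fin 2) ℂ) :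
    U 1 1 = star (U 0 0) ∧ U 0 1 = - star (U 1 0) := by
  rw [Matrix.mem_specialUnitaryGroup_iff, Matrix.mem_unitaryGroup_iff'] at hU
  obtain ⟨h1, h2⟩ := hU
  rw [Matrix.det_fin_two] at h2
  have e00 := congrFun (congrFun h1 0) 0
  have e01 := congrFun (congrFun h1 0) 1
  simp [Matrix.mul_apply, Fin.sum_univ_two] at e00 e01
  simp only [Complex.star_def]
  constructor
  · linear_combination (-U 1 1) * e00 + U 1 0 * e01 + (starRingEnd ℂ) (U 0 0) * h2
  · linear_combination (-U 0 1) * e00 + U 0 0 * e01 - (starRingEnd ℂ) (U 1 0) * h2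

lemma core_two
    (L : Matrix (Fin 2) (Fin 2) ℂ →ₗ[ℂ] (Fin 2 → ℂ)) (c : Matrix (Fin 2) (Fin 2) ℂ → ℂ)
    (h : ∀ U ∈ Matrix.specialUnitaryGroup (Fin 2) ℂ, ∀ i, L U i = c U * star (U 0 i)) :
    ∃ β : ℂ, ∀ U ∈ Matrix.specialUnitaryGroup (Fin 2) ℂ, c U = β := by
  obtain ⟨ℓ, hℓ⟩ : ∃ ℓ : Fin 2 → Fin 2 → Fin 2 → ℂ, ∀ U i, L U i =
      U 0 0 * ℓ 0 0 i + U 1 0 * ℓ 1 0 i + (U 0 1 * ℓ 0 1 i + U 1 1 * ℓ 1 1 i) :=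
    ⟨fun r s i => L (Matrix.single r s 1) i, fun U i => by
      rw [lin_expand]; simp [Fin.sum_univ_two]⟩
  have H : ∀ x y : ℂ, x * star x + y * star y = 1 → ∃ c : ℂ,
      x * ℓ 0 0 0 + y * ℓ 1 0 0 + (-star y * ℓ 0 1 0 + star x * ℓ 1 1 0) = c * star x ∧
      x * ℓ 0 0 1 + y * ℓ 1 0 1 + (-star y * ℓ 0 1 1 + star x * ℓ 1 1 1) = c * (- y) := by
    intro x y hxy
    have h0 := h _ (su2_mem x y hxy) 0
    have h1 := h _ (su2_mem x y hxy) 1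
    rw [hℓ] at h0 h1
    refine ⟨_, by simpa using h0, by simpa using h1⟩
  obtain ⟨_, a1, -⟩ := H 0 1 (by simp)
  obtain ⟨_, a2, -⟩ := H 0 Complex.I (by simp)
  obtain ⟨_, -, a3⟩ := H 1 0 (by simp)
  obtain ⟨_, -, a4⟩ := H Complex.I 0 (by simp)
  simp only [Complex.star_def, Complex.conj_I, map_zero, map_one, zero_mul, mul_zero, neg_zero, zero_add, add_zero, one_mul, neg_neg] at a1 a2 a3 a4
  have I2 := Complex.I_sq
  have z1 : ℓ 1 0 0 = 0 := by
    linear_combination (1/2) * a1 - (Complex.I/2) * a2 + (ℓ 1 0 0 + ℓ 0 1 0) /2 * I2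
  have z2 : ℓ 0 1 0 = 0 := by
    linear_combination z1 - a1
  have z3 : ℓ 0 0 1 = 0 := by
    linear_combination (1/2) * a3 - (Complex.I/2) * a4 + (ℓ 0 0 1 - ℓ 1 1 1) /2 * I2
  have z4 : ℓ 1 1 1 = 0 := by
    linear_combination a3 - z3
  simp only [z1, z2, z3, z4, mul_zero, add_zero, zero_add] at H
  have K : ∀ x y : ℂ, x * star x + y * star y = 1 →
      y * (x * ℓ 0 0 0 + star x * ℓ 1 1 0) + star x * (y * ℓ 1 0 1 - star y * ℓ 0 1 1) = 0 := by
    intro x y hxy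
    obtain ⟨c, h1, h2⟩ := H x y hxy
    linear_combination y * h1 + star x * h2
  have s3 : star (3/5 : ℂ) = 3/5 := by simp
  have s4 : star (4/5 : ℂ) = 4/5 := by simp
  have sI : star Complex.I = - Complex.I := by simp
  have b1 := K (3/5) (4/5) (by rw [s3, s4]; norm_num)
  have b2 := K (3/5 * Complex.I) (4/5) (by rw [star_mul', s3, s4, sI]; linear_combination (-9/25) * I2)
  have b3 := K (3/5) (4/5 * Complex.I) (by rw [star_mul', s3, s4, sI]; linear_combination (-16/25) * I2)
  simp only [star_mul', s3, s4, sI] at b1 b2 b3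
  have c1 : ℓ 0 0 0 + ℓ 1 1 0 + ℓ 1 0 1 - ℓ 0 1 1 = 0 := by linear_combination (25/12) * b1
  have c2 : ℓ 0 0 0 - ℓ 1 1 0 - ℓ 1 0 1 + ℓ 0 1 1 = 0 := by
    linear_combination (-25/12 * Complex.I) * b2 + (ℓ 0 0 0 - ℓ 1 1 0 - ℓ 1 0 1 + ℓ 0 1 1) * I2
  have c3 : ℓ 0 0 0 + ℓ 1 1 0 + ℓ 1 0 1 + ℓ 0 1 1 = 0 := by
    linear_combination (-25/12 * Complex.I) * b3 + (ℓ 0 0 0 + ℓ 1 1 0 + ℓ 1 0 1 + ℓ 0 1 1) * I2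
  have d1 : ℓ 0 0 0 = 0 := by linear_combination (1/2) * c1 + (1/2) * c2
  have d2 : ℓ 0 1 1 = 0 := by linear_combination (1/2) * c3 - (1/2) * c1
  have d3 : ℓ 1 0 1 = - ℓ 1 1 0 := by linear_combination c1 - d1 + d2
  refine ⟨ℓ 1 1 0, fun U hU => ?_⟩
  have h0 := h U hU 0
  have h1 := h U hU 1
  rw [hℓ] at h0 h1
  obtain ⟨f1, f2⟩ := su2_form hU
  have hdet := (Matrix.mem_specialUnitaryGroup_iff.1 hU).2
  rw [Matrix.det_fin_two] at hdet
  simp only [z1, z2, z3, z4, d1, d2, d3, f1, f2, star_neg, star_star] at h0 h1 hdet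
  linear_combination (-U 0 0) * h0 + star (U 1 0) * h1 - (c U - ℓ 1 1 0) * hdet

lemma rot_aux {d : ℕ} (z : Fin d) (u : Fin d → ℂ)
    (L : Matrix (Fin d) (Fin d) ℂ →ₗ[ℂ] (Fin d → ℂ)) (c : Matrix (Fin d) (Fin d) ℂ → ℂ)
    (h : ∀ U ∈ Matrix.specialUnitaryGroup (Fin d) ℂ, ∀ i, L U i = c U * ∑ j, star (U j i) * u j)
    (V : Matrix (Fin d) (Fin d) ℂ) (hV : V ∈ Matrix.specialUnitaryGroup (Fin d) ℂ) (r : ℂ)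
    (hVu : ∀ i, u i = r * V i z) :
    ∀ U ∈ Matrix.specialUnitaryGroup (Fin d) ℂ, ∀ i,
      (L ∘ₗ LinearMap.mulLeft ℂ V) U i = (fun U => r * c (V * U)) U * star (U z i) := by
  intro U hU i
  simp only [LinearMap.comp_apply, LinearMap.mulLeft_apply]
  rw [h _ (mul_mem hV hU)]
  have e : star (V * U) * V = star U := by
    rw [star_mul, mul_assoc,
      Matrix.mem_unitaryGroup_iff'.1 (Matrix.mem_specialUnitaryGroup_iff.1 hV).1, mul_one]
  have e2 := congrFun (congrFun e i) z
  rw [Matrix.mul_apply] at e2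
  simp only [Matrix.star_apply] at e2
  rw [← e2]
  simp only [hVu, Finset.mul_sum]
  exact Finset.sum_congr rfl fun j _ => by ring

lemma rot_big {d : ℕ} (hd : 2 < d) (u : Fin d → ℂ) (hu : u ≠ 0)
    (L : Matrix (Fin d) (Fin d) ℂ →ₗ[ℂ] (Fin d → ℂ)) (c : Matrix (Fin d) (Fin d) ℂ → ℂ)
    (h : ∀ U ∈ Matrix.specialUnitaryGroup (Fin d) ℂ, ∀ i, L U i = c U * ∑ j, star (U j i) * u j) :
    ∀ U ∈ Matrix.specialUnitaryGroup (Fin d) ℂ, c U = 0 := by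
  let z : Fin d := ⟨0, by omega⟩
  obtain ⟨V, hV, r, hr, hVu⟩ := exists_su_col z u hu
  have := core_big hd z (L ∘ₗ LinearMap.mulLeft ℂ V) (fun U => r * c (V * U)) ?_
  · intro U hU
    have hV' : star V ∈ Matrix.specialUnitaryGroup (Fin d) ℂ :=
      (star (⟨V, hV⟩ : Matrix.specialUnitaryGroup (Fin d) ℂ)).2
    have h1 := this (star V * U) (mul_mem hV' hU)
    simp only [← mul_assoc, Matrix.mem_unitaryGroup_iff.1 (Matrix.mem_specialUnitaryGroup_iff.1 hV).1, one_mul] at h1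
    exact (mul_eq_zero.1 h1).resolve_left hr
  · exact rot_aux z u L c h V hV r hVu


lemma rot_two (u : Fin 2 → ℂ) (hu : u ≠ 0)
    (L : Matrix (Fin 2) (Fin 2) ℂ →ₗ[ℂ] (Fin 2 → ℂ)) (c : Matrix (Fin 2) (Fin 2) ℂ → ℂ)
    (h : ∀ U ∈ Matrix.specialUnitaryGroup (Fin 2) ℂ, ∀ i, L U i = c U * ∑ j, star (U j i) * u j) :
    ∃ β : ℂ, ∀ U ∈ Matrix.specialUnitaryGroup (Fin 2) ℂ, c U = β := by
  obtain ⟨V, hV, r, hr, hVu⟩ := exists_su_col 0 u hu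
  obtain ⟨β, hβ⟩ := core_two (L ∘ₗ LinearMap.mulLeft ℂ V) (fun U => r * c (V * U))
    (rot_aux 0 u L c h V hV r hVu)
  refine ⟨r⁻¹ * β, fun U hU => ?_⟩
  have hV' : star V ∈ Matrix.specialUnitaryGroup (Fin 2) ℂ :=
    (star (⟨V, hV⟩ : Matrix.specialUnitaryGroup (Fin 2) ℂ)).2
  have h1 := hβ (star V * U) (mul_mem hV' hU)
  simp only [← mul_assoc, Matrix.mem_unitaryGroup_iff.1 (Matrix.mem_specialUnitaryGroup_iff.1 hV).1, one_mul] at h1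
  rw [← h1]
  field_simp

/-- SU(2) spans. -/
lemma su2_span (f g : Matrix (Fin 2) (Fin 2) ℂ →ₗ[ℂ] ℂ)
    (h : ∀ U ∈ Matrix.specialUnitaryGroup (Fin 2) ℂ, f U = g U) : f = g := by
  have key : ∀ U, f U - g U = U 0 0 * (f - g) (Matrix.single 0 0 1) + U 1 0 * (f - g) (Matrix.single 1 0 1)
      + (U 0 1 * (f - g) (Matrix.single 0 1 1) + U 1 1 * (f - g) (Matrix.single 1 1 1)) := by
    intro U
    rw [← LinearMap.sub_apply, lin_expand]; simp [Fin.sum_univ_two]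
  have H : ∀ x y : ℂ, x * star x + y * star y = 1 → _ := fun x y hxy =>
    (key !![x, -star y; y, star x]).symm.trans (sub_eq_zero.2 (h _ (su2_mem x y hxy)))
  have a1 := H 1 0 (by simp)
  have a2 := H Complex.I 0 (by simp)
  have a3 := H 0 1 (by simp)
  have a4 := H 0 Complex.I (by simp)
  generalize (f - g) (Matrix.single 0 0 1) = k1 at *
  generalize (f - g) (Matrix.single 1 0 1) = k2 at *
  generalize (f - g) (Matrix.single 0 1 1) = k3 at *
  generalize (f - g) (Matrix.single 1 1 1) = k4 at *
  simp at a1 a2 a3 a4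
  have I2 := Complex.I_sq
  have z1 : k1 = 0 := by linear_combination (1/2) * a1 - (Complex.I/2) * a2 + (k1 - k4)/2 * I2
  have z4 : k4 = 0 := by linear_combination a1 - z1
  have z2 : k2 = 0 := by linear_combination (1/2) * a3 - (Complex.I/2) * a4 + (k2 + k3)/2 * I2
  have z3 : k3 = 0 := by linear_combination z2 - a3
  ext1 U
  have := key U
  rw [z1, z2, z3, z4] at this
  simpa [sub_eq_zero] using this

open scoped MatrixOrder Matrix.Norms.L2Operator in
lemma psd_decomp {n : Type*} [Fintype n] [DecidableEq n] {S : Matrix n n ℂ} (hS : S.PosSemidef) :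
    ∃ B : Matrix n n ℂ, S = Bᴴ * B := by
  obtain ⟨B, hB⟩ := CStarAlgebra.nonneg_iff_eq_star_mul_self.mp hS.nonneg
  exact ⟨B, hB⟩

/-- linear functional on matrices with given coefficients -/
def linOf {d : ℕ} (g : Fin d × Fin d → ℂ) : Matrix (Fin d) (Fin d) ℂ →ₗ[ℂ] ℂ where
  toFun U := ∑ a, U a.2 a.1 * g a
  map_add' U V := by simp [add_mul, Finset.sum_add_distrib]
  map_smul' c U := by simp [Finset.mul_sum, mul_assoc]

lemma linOf_apply {d : ℕ} (g : Fin d × Fin d → ℂ) (U : Matrix (Fin d) (Fin d) ℂ) :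
    linOf g U = ∑ a, U a.2 a.1 * g a := rfl

lemma linOf_single {d : ℕ} (g : Fin d × Fin d → ℂ) (a : Fin d × Fin d) :
    linOf g (Matrix.single a.2 a.1 1) = g a := by
  rw [linOf_apply, Finset.sum_eq_single a]
  · simp
  · intro b _ hb
    have : ¬ (a.2 = b.2 ∧ a.1 = b.1) := fun h => hb (Prod.ext h.2.symm h.1.symm)
    rw [Matrix.single_apply, if_neg this, zero_mul]
  · simp

/-- The action as a double sum. -/
lemma actB_apply' {d m : ℕ}
    (S : Matrix ((Fin d × Fin d) × (Fin m × Fin d)) ((Fin d × Fin d) × (Fin m × Fin d)) ℂ)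
    (U : Matrix (Fin d) (Fin d) ℂ) (b b' : Fin m × Fin d) :
    actB S U b b' = ∑ a, ∑ c, S (a, b) (c, b') * (star (U c.2 c.1) * U a.2 a.1) := by
  simp only [actB, ptrLeft, Matrix.mul_apply]
  refine Finset.sum_congr rfl fun a _ => ?_
  rw [Fintype.sum_prod_type]
  refine Finset.sum_congr rfl fun c _ => ?_
  simp [Matrix.kroneckerMap_apply, choiProj, outer, choiVec, mconj, Matrix.vecMulVec_apply,
    Matrix.one_apply]

lemma actB_decomp {d m : ℕ} {K : Type*} [Fintype K]
    (S : Matrix ((Fin d × Fin d) × (Fin m × Fin d)) ((Fin d × Fin d) × (Fin m × Fin d)) ℂ)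
    (s : K → ((Fin d × Fin d) × (Fin m × Fin d)) → ℂ)
    (hS : ∀ x y, S x y = ∑ k, s k x * star (s k y))
    (U : Matrix (Fin d) (Fin d) ℂ) (b b' : Fin m × Fin d) :
    actB S U b b' = ∑ k, linOf (fun a => s k (a, b)) U * star (linOf (fun a => s k (a, b')) U) := by
  rw [actB_apply']
  simp only [linOf_apply, star_sum, Finset.sum_mul_sum]
  simp only [hS, Finset.sum_mul]
  symm
  rw [Finset.sum_comm]
  refine Finset.sum_congr rfl fun a _ => ?_
  rw [Finset.sum_comm]
  refine Finset.sum_congr rfl fun c _ => Finset.sum_congr rfl fun k _ => ?_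
  rw [star_mul']
  ring

/-- the target vector -/
def wv {d m : ℕ} (ψ : Fin m × Fin d → ℂ) (U : Matrix (Fin d) (Fin d) ℂ) : Fin m × Fin d → ℂ :=
  fun b => ∑ j, star (U j b.2) * ψ (b.1, j)

lemma wv_eq {d m : ℕ} (ψ : Fin m × Fin d → ℂ) (U : Matrix (Fin d) (Fin d) ℂ) :
    ((1 : Matrix (Fin m) (Fin m) ℂ) ⊗ₖ Uᴴ) *ᵥ ψ = wv ψ U := by
  ext b
  simp only [Matrix.mulVec, dotProduct, wv, Fintype.sum_prod_type, Matrix.kroneckerMap_apply,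
    Matrix.one_apply, ite_mul, one_mul, zero_mul, Matrix.conjTranspose_apply]
  rw [Finset.sum_eq_single b.1]
  · simp
  · intro a _ ha
    simp [Ne.symm ha]
  · simp

lemma target_apply {d m : ℕ} (ψ : Fin m × Fin d → ℂ) (U : Matrix (Fin d) (Fin d) ℂ) (p : ℂ)
    (b b' : Fin m × Fin d) :
    (p • (((1 : Matrix (Fin m) (Fin m) ℂ) ⊗ₖ Uᴴ) * outer ψ *
              ((1 : Matrix (Fin m) (Fin m) ℂ) ⊗ₖ Uᴴ)ᴴ)) b b' = p * (wv ψ U b * star (wv ψ U b')) := by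
  rw [outer, Matrix.mul_vecMulVec, Matrix.vecMulVec_mul, ← Matrix.star_mulVec, wv_eq]
  simp [Matrix.vecMulVec_apply]

lemma wv_norm {d m : ℕ} (ψ : Fin m × Fin d → ℂ) (hψ : star ψ ⬝ᵥ ψ = 1)
    (U : Matrix (Fin d) (Fin d) ℂ) (hU : U ∈ Matrix.specialUnitaryGroup (Fin d) ℂ) :
    ∑ b, star (wv ψ U b) * wv ψ U b = 1 := by
  change star (wv ψ U) ⬝ᵥ wv ψ U = 1
  rw [← wv_eq, Matrix.star_mulVec, ← Matrix.dotProduct_mulVec, Matrix.mulVec_mulVec,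
    Matrix.conjTranspose_kronecker, ← Matrix.mul_kronecker_mul, Matrix.conjTranspose_conjTranspose]
  have := Matrix.mem_unitaryGroup_iff.1 (Matrix.mem_specialUnitaryGroup_iff.1 hU).1
  rw [Matrix.star_eq_conjTranspose] at this
  rw [this]
  simpa using hψ

lemma rank_one_struct {K n : Type*} [Fintype K] [Fintype n] [DecidableEq n]
    (v : K → n → ℂ) (w : n → ℂ) (p : ℂ)
    (hw : ∑ b, star (w b) * w b = 1)
    (h : ∀ b b', ∑ k, v k b * star (v k b') = p * (w b * star (w b'))) :
    (∀ k b, v k b = (∑ b', star (w b') * v k b') * w b) ∧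
    ∑ k, (∑ b', star (w b') * v k b') * star (∑ b', star (w b') * v k b') = p := by
  have key : ∀ f : n → ℂ, ∑ k, (∑ b, f b * v k b) * star (∑ b, f b * v k b) =
      p * ((∑ b, f b * w b) * star (∑ b, f b * w b)) := by
    intro f
    simp only [star_sum, Finset.sum_mul_sum]
    simp only [Finset.mul_sum]
    rw [Finset.sum_comm]
    refine Finset.sum_congr rfl fun b _ => ?_
    rw [Finset.sum_comm]
    refine Finset.sum_congr rfl fun b' _ => ?_
    have := h b b'
    calc _ = f b * star (f b') * ∑ k, v k b * star (v k b') := by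
          rw [Finset.mul_sum]
          exact Finset.sum_congr rfl fun k _ => by rw [star_mul']; ring
      _ = _ := by rw [this, star_mul']; ring
  constructor
  · intro k b
    have h1 := key (fun b' => (if b' = b then 1 else 0) - w b * star (w b'))
    have e : ∀ x : n → ℂ, ∑ b', ((if b' = b then (1:ℂ) else 0) - w b * star (w b')) * x b' =
        x b - w b * ∑ b', star (w b') * x b' := by
      intro x
      simp [sub_mul, Finset.sum_sub_distrib, Finset.mul_sum, mul_assoc]
    simp only [e, hw, mul_one, sub_self, zero_mul, mul_zero] at h1
    have h2 := (Finset.sum_eq_zero_iff_of_nonneg (fun k _ => mul_star_self_nonneg _)).1 h1 k (Finset.mem_univ _)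
    have h3 := (mul_eq_zero.1 h2).elim id (fun h => star_eq_zero.1 h)
    linear_combination h3
  · rw [key, hw]; simp

lemma structure_thm {d m : ℕ} (ψ : Fin m × Fin d → ℂ) (hψ : star ψ ⬝ᵥ ψ = 1)
    (S : Matrix ((Fin d × Fin d) × (Fin m × Fin d)) ((Fin d × Fin d) × (Fin m × Fin d)) ℂ)
    (hS : S.PosSemidef) (p : ℝ)
    (h : ∀ U : Matrix (Fin d) (Fin d) ℂ, U ∈ Matrix.specialUnitaryGroup (Fin d) ℂ →
          actB S U = (p : ℂ) •
            (((1 : Matrix (Fin m) (Fin m) ℂ) ⊗ₖ Uᴴ) * outer ψ *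
              ((1 : Matrix (Fin m) (Fin m) ℂ) ⊗ₖ Uᴴ)ᴴ)) :
    ∃ (s : ((Fin d × Fin d) × (Fin m × Fin d)) → ((Fin d × Fin d) × (Fin m × Fin d)) → ℂ)
      (c : ((Fin d × Fin d) × (Fin m × Fin d)) → Matrix (Fin d) (Fin d) ℂ → ℂ),
      (∀ x y, S x y = ∑ k, s k x * star (s k y)) ∧
      (∀ U ∈ Matrix.specialUnitaryGroup (Fin d) ℂ, ∀ k b,
        linOf (fun a => s k (a, b)) U = c k U * wv ψ U b) ∧
      (∀ U ∈ Matrix.specialUnitaryGroup (Fin d) ℂ, ∑ k, c k U * star (c k U) = p) := by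
  obtain ⟨B, hB⟩ := psd_decomp hS
  have hs : ∀ x y, S x y = ∑ k, (fun k x => star (B k x)) k x * star ((fun k x => star (B k x)) k y) := by
    intro x y
    simp [hB, Matrix.mul_apply]
  refine ⟨fun k x => star (B k x),
    fun k U => ∑ b', star (wv ψ U b') * linOf (fun a => star (B k (a, b'))) U, hs, ?_, ?_⟩
  · intro U hU
    exact (rank_one_struct (fun k b => linOf (fun a => star (B k (a, b))) U) (wv ψ U) p
      (wv_norm ψ hψ U hU) (fun b b' => by
        rw [← target_apply, ← h U hU, actB_decomp S _ hs])).1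
  · intro U hU
    exact (rank_one_struct (fun k b => linOf (fun a => star (B k (a, b))) U) (wv ψ U) p
      (wv_norm ψ hψ U hU) (fun b b' => by
        rw [← target_apply, ← h U hU, actB_decomp S _ hs])).2

lemma exists_slice {d m : ℕ} (ψ : Fin m × Fin d → ℂ) (hψ : star ψ ⬝ᵥ ψ = 1) :
    ∃ a, (fun j => ψ (a, j)) ≠ 0 := by
  by_contra hcon
  push Not at hcon
  have : ψ = 0 := by
    ext ⟨a, j⟩
    exact congrFun (hcon a) j
  rw [this] at hψ
  simp at hψ

lemma big_case {d m : ℕ} (hd : 2 < d) (ψ : Fin m × Fin d → ℂ) (hψ : star ψ ⬝ᵥ ψ = 1)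
    (S : Matrix ((Fin d × Fin d) × (Fin m × Fin d)) ((Fin d × Fin d) × (Fin m × Fin d)) ℂ)
    (hS : S.PosSemidef) (p : ℝ)
    (h : ∀ U : Matrix (Fin d) (Fin d) ℂ, U ∈ Matrix.specialUnitaryGroup (Fin d) ℂ →
          actB S U = (p : ℂ) •
            (((1 : Matrix (Fin m) (Fin m) ℂ) ⊗ₖ Uᴴ) * outer ψ *
              ((1 : Matrix (Fin m) (Fin m) ℂ) ⊗ₖ Uᴴ)ᴴ)) : p = 0 := by
  obtain ⟨s, c, -, h2, h3⟩ := structure_thm ψ hψ S hS p h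
  obtain ⟨a, ha⟩ := exists_slice ψ hψ
  have hc : ∀ k, c k 1 = 0 := fun k =>
    rot_big hd _ ha (LinearMap.pi fun i => linOf (fun x => s k (x, (a, i)))) (c k)
      (fun U hU i => h2 U hU k (a, i)) 1 (one_mem _)
  have := h3 1 (one_mem _)
  simp [hc] at this
  exact_mod_cast this.symm

/-- the rotated amplitudes -/
def chi {m : ℕ} (ψ : Fin m × Fin 2 → ℂ) (a : Fin m) : Fin 2 → ℂ := ![ψ (a, 1), -ψ (a, 0)]

def sv {m : ℕ} (ψ : Fin m × Fin 2 → ℂ) : ((Fin 2 × Fin 2) × (Fin m × Fin 2)) → ℂ :=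
  fun x => (!![0, 1; -1, 0] : Matrix (Fin 2) (Fin 2) ℂ) x.1.1 x.2.2 * chi ψ x.2.1 x.1.2

lemma sv_lin {m : ℕ} (ψ : Fin m × Fin 2 → ℂ) (U : Matrix (Fin 2) (Fin 2) ℂ)
    (hU : U ∈ Matrix.specialUnitaryGroup (Fin 2) ℂ) (b : Fin m × Fin 2) :
    linOf (fun a => sv ψ (a, b)) U = wv ψ U b := by
  obtain ⟨a, i⟩ := b
  obtain ⟨f1, f2⟩ := su2_form hU
  rw [linOf_apply]
  fin_cases i <;>
    simp [wv, sv, chi, Fintype.sum_prod_type, Fin.sum_univ_two, f1, f2] <;> ring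

lemma two_struct {m : ℕ} (ψ : Fin m × Fin 2 → ℂ) (hψ : star ψ ⬝ᵥ ψ = 1)
    (S : Matrix ((Fin 2 × Fin 2) × (Fin m × Fin 2)) ((Fin 2 × Fin 2) × (Fin m × Fin 2)) ℂ)
    (hS : S.PosSemidef) (p : ℝ)
    (h : ∀ U : Matrix (Fin 2) (Fin 2) ℂ, U ∈ Matrix.specialUnitaryGroup (Fin 2) ℂ →
          actB S U = (p : ℂ) •
            (((1 : Matrix (Fin m) (Fin m) ℂ) ⊗ₖ Uᴴ) * outer ψ *
              ((1 : Matrix (Fin m) (Fin m) ℂ) ⊗ₖ Uᴴ)ᴴ)) : S = (p : ℂ) • outer (sv ψ) := by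
  obtain ⟨s, c, h1, h2, h3⟩ := structure_thm ψ hψ S hS p h
  obtain ⟨a, ha⟩ := exists_slice ψ hψ
  have hc : ∀ k, ∃ β : ℂ, ∀ U ∈ Matrix.specialUnitaryGroup (Fin 2) ℂ, c k U = β := fun k =>
    rot_two _ ha (LinearMap.pi fun i => linOf (fun x => s k (x, (a, i)))) (c k)
      (fun U hU i => h2 U hU k (a, i))
  choose β hβ using hc
  have hs : ∀ k x, s k x = β k * sv ψ x := by
    rintro k ⟨x, b⟩
    have := su2_span (linOf (fun a => s k (a, b))) (β k • linOf (fun a => sv ψ (a, b))) (by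
      intro U hU
      rw [h2 U hU, hβ k U hU, LinearMap.smul_apply, sv_lin ψ U hU, smul_eq_mul])
    have h4 := LinearMap.congr_fun this (Matrix.single x.2 x.1 1)
    rwa [LinearMap.smul_apply, linOf_single, linOf_single, smul_eq_mul] at h4
  have hp := h3 1 (one_mem _)
  simp only [fun k => hβ k 1 (one_mem _)] at hp
  ext x y
  rw [h1, Matrix.smul_apply, outer, Matrix.vecMulVec_apply, ← hp, smul_eq_mul, Finset.sum_mul]
  refine Finset.sum_congr rfl fun k _ => ?_
  rw [hs, hs, star_mul', Pi.star_apply]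
  ring

lemma ptrRight_psd {α β : Type*} [Fintype α] [Fintype β] {X : Matrix (α × β) (α × β) ℂ} (hX : X.PosSemidef) :
    (ptrRight X).PosSemidef := by
  have : ptrRight X = ∑ b, X.submatrix (fun a => (a, b)) (fun a => (a, b)) := by
    ext a a'
    simp [ptrRight, Matrix.sum_apply]
  rw [this]
  exact Matrix.posSemidef_sum _ fun b _ => hX.submatrix _

def Em : Matrix (Fin 2) (Fin 2) ℂ := !![0, 1; -1, 0]

lemma Em_conj (a b c e : ℂ) :
    Em * !![a, b; c, e] * Emᴴ = !![e, -c; -b, a] := by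
  ext i j
  fin_cases i <;> fin_cases j <;> simp [Em, Matrix.vecMul, dotProduct, Matrix.conjTranspose_apply, Fin.sum_univ_two]

lemma ptrRight_sv {m : ℕ} (ψ : Fin m × Fin 2 → ℂ) :
    ptrRight (outer (sv ψ)) = (1 : Matrix (Fin 2) (Fin 2) ℂ) ⊗ₖ (Em * ptrLeft (outer ψ) * Emᴴ) := by
  rw [Matrix.eta_fin_two (ptrLeft (outer ψ)), Em_conj]
  ext ⟨I, O⟩ ⟨I', O'⟩
  fin_cases I <;> fin_cases I' <;> fin_cases O <;> fin_cases O' <;>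
  simp [ptrRight, outer, sv, chi, ptrLeft, Matrix.vecMulVec_apply, Fintype.sum_prod_type,
    Fin.sum_univ_two]

lemma Em_unit : Emᴴ * Em = 1 ∧ Em * Emᴴ = 1 := by
  constructor <;> ext i j <;> fin_cases i <;> fin_cases j <;>
    simp [Em, Matrix.mul_apply, Fin.sum_univ_two]

lemma rotE (r : ℂ) (M : Matrix (Fin 2) (Fin 2) ℂ) :
    (1 - r • M).PosSemidef ↔ (1 - r • (Em * M * Emᴴ)).PosSemidef := by
  have e : 1 - r • (Em * M * Emᴴ) = Em * (1 - r • M) * Emᴴ := by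
    rw [mul_sub, sub_mul, mul_one, Em_unit.2]; simp
  constructor
  · intro h
    rw [e]; exact h.mul_mul_conjTranspose_same _
  · intro h
    have := h.conjTranspose_mul_mul_same Em
    rw [e] at this
    have e2 : Emᴴ * (Em * (1 - r • M) * Emᴴ) * Em = (Emᴴ * Em) * (1 - r • M) * (Emᴴ * Em) := by
      simp only [mul_assoc]
    rw [e2, Em_unit.1, one_mul, mul_one] at this
    exact this

lemma lamMax_spec {n : ℕ} (hn : 0 < n) (M : Matrix (Fin n) (Fin n) ℂ) (hM : M.IsHermitian) :
    ((lamMax M : ℂ) • 1 - M).PosSemidef ∧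
    ∀ r : ℝ, (1 - (r : ℂ) • M).PosSemidef → r * lamMax M ≤ 1 := by
  have : Nonempty (Fin n) := ⟨⟨0, hn⟩⟩
  have hl : lamMax M = sSup (Set.range hM.eigenvalues) := by
    unfold lamMax
    rw [hM.spectrum_eq_image_range, Set.image_image]
    simp
  have hfin : (Set.range hM.eigenvalues).Finite := Set.finite_range _
  constructor
  · rw [Matrix.posSemidef_iff_isHermitian_and_spectrum_nonneg]
    constructor
    · refine Matrix.IsHermitian.sub ?_ hM
      rw [Matrix.IsHermitian, Matrix.conjTranspose_smul]
      simp
    · rw [← Algebra.algebraMap_eq_smul_one, ← spectrum.singleton_sub_eq, hM.spectrum_eq_image_range]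
      rintro x ⟨y, hy, z, ⟨t, ⟨i, rfl⟩, rfl⟩, rfl⟩
      rw [Set.mem_singleton_iff] at hy
      subst hy
      have : hM.eigenvalues i ≤ lamMax M := by
        rw [hl]; exact le_csSup hfin.bddAbove ⟨i, rfl⟩
      change (0 : ℂ) ≤ (lamMax M : ℂ) - (hM.eigenvalues i : ℂ)
      rw [sub_nonneg]
      exact_mod_cast this
  · intro r hr
    obtain ⟨i, hi⟩ := (Set.range_nonempty hM.eigenvalues).csSup_mem hfin
    rw [← hl] at hi
    have h1 := hr.dotProduct_mulVec_nonneg ⇑(hM.eigenvectorBasis i)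
    have hv : star ⇑(hM.eigenvectorBasis i) ⬝ᵥ ⇑(hM.eigenvectorBasis i) = 1 := by
      have := hM.eigenvectorBasis.orthonormal.1 i
      have h2 := inner_self_eq_norm_sq_to_K (𝕜 := ℂ) (hM.eigenvectorBasis i)
      rw [this, EuclideanSpace.inner_eq_star_dotProduct, dotProduct_comm] at h2
      simpa using h2
    rw [Matrix.sub_mulVec, Matrix.one_mulVec, Matrix.smul_mulVec, hM.mulVec_eigenvectorBasis, hi,
      dotProduct_sub, dotProduct_smul, dotProduct_smul, hv] at h1
    have h2 := (Complex.le_def.1 h1).1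
    simp at h2
    linarith

lemma two_case {m : ℕ} (hm : 1 ≤ m) (ψ : Fin m × Fin 2 → ℂ) (hψ : star ψ ⬝ᵥ ψ = 1) :
      IsGreatest
        {p : ℝ |
          ∃ S Sch : Matrix ((Fin 2 × Fin 2) × (Fin m × Fin 2))
              ((Fin 2 × Fin 2) × (Fin m × Fin 2)) ℂ,
            IsProtocolB S Sch ∧
            ∀ U : Matrix (Fin 2) (Fin 2) ℂ, U ∈ Matrix.specialUnitaryGroup (Fin 2) ℂ →
              actB S U = (p : ℂ) •
                (((1 : Matrix (Fin m) (Fin m) ℂ) ⊗ₖ Uᴴ) * outer ψ *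
                  ((1 : Matrix (Fin m) (Fin m) ℂ) ⊗ₖ Uᴴ)ᴴ)}
        (1 / (2 * lamMax (ptrLeft (outer ψ)))) := by
  set M := ptrLeft (outer ψ) with hMdef
  have hM : M.IsHermitian := by
    ext i j
    simp [hMdef, ptrLeft, outer, Matrix.vecMulVec_apply, mul_comm]
  have htr : M.trace = 1 := by
    rw [← hψ]
    simp only [Matrix.trace, Matrix.diag, hMdef, ptrLeft, outer, Matrix.vecMulVec_apply, dotProduct,
      Fintype.sum_prod_type]
    rw [Finset.sum_comm]
    simp [mul_comm]
  obtain ⟨hA, hB⟩ := lamMax_spec (by norm_num) M hM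
  set l := lamMax M
  have hl : 0 < l := by
    have := (Complex.le_def.1 hA.trace_nonneg).1
    simp [Matrix.trace_sub, htr] at this
    linarith
  constructor
  · set p : ℝ := 1 / (2 * l) with hp
    have hp0 : 0 ≤ p := by positivity
    have hp0' : (0 : ℂ) ≤ (p : ℂ) := by exact_mod_cast hp0
    have hpsd : (1 - ((2 * p : ℝ) : ℂ) • (Em * M * Emᴴ)).PosSemidef := by
      rw [← rotE]
      have := hA.smul (a := ((2 * p : ℝ) : ℂ)) (by exact_mod_cast (by positivity : 0 ≤ 2 * p))
      rw [smul_sub, smul_smul] at this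
      have e : ((2 * p : ℝ) : ℂ) * (l : ℂ) = 1 := by
        have : 2 * p * l = 1 := by rw [hp]; field_simp
        exact_mod_cast this
      rwa [e, one_smul] at this
    have houter : (outer (sv ψ)).PosSemidef := Matrix.posSemidef_vecMulVec_self_star _
    let e0 : Fin m × Fin 2 → ℂ := Pi.single (⟨0, hm⟩, 0) 1
    have he0 : (outer e0).PosSemidef := Matrix.posSemidef_vecMulVec_self_star _
    have he0t : ∑ b, outer e0 b b = 1 := by
      rw [Finset.sum_eq_single (⟨0, hm⟩, 0)]
      · simp [outer, e0, Matrix.vecMulVec_apply]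
      · intro b _ hb
        simp [outer, e0, Matrix.vecMulVec_apply, hb]
      · simp
    let Y : Matrix (Fin 2) (Fin 2) ℂ := (1/2 : ℂ) • (1 - ((2 * p : ℝ) : ℂ) • (Em * M * Emᴴ))
    have hY : Y.PosSemidef := hpsd.smul (by
      rw [Complex.le_def]; norm_num)
    refine ⟨(p : ℂ) • outer (sv ψ), (p : ℂ) • outer (sv ψ) +
      ((1 : Matrix (Fin 2) (Fin 2) ℂ) ⊗ₖ Y) ⊗ₖ outer e0, ⟨houter.smul hp0', ?_, ?_⟩, ?_⟩
    · rw [add_sub_cancel_left]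
      exact (Matrix.PosSemidef.one.kronecker hY).kronecker he0
    · refine ⟨(1/2 : ℂ) • 1, Matrix.PosSemidef.one.smul (by rw [Complex.le_def]; norm_num),
        by simp, ?_⟩
      have e1 : ptrRight ((p : ℂ) • outer (sv ψ) +
          ((1 : Matrix (Fin 2) (Fin 2) ℂ) ⊗ₖ Y) ⊗ₖ outer e0) =
          (p : ℂ) • ptrRight (outer (sv ψ)) + (1 : Matrix (Fin 2) (Fin 2) ℂ) ⊗ₖ Y := by
        ext x y
        change ∑ b, ((p : ℂ) * outer (sv ψ) (x, b) (y, b) +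
          ((1 : Matrix (Fin 2) (Fin 2) ℂ) ⊗ₖ Y) x y * outer e0 b b) =
          (p : ℂ) * ∑ b, outer (sv ψ) (x, b) (y, b) + ((1 : Matrix (Fin 2) (Fin 2) ℂ) ⊗ₖ Y) x y
        rw [Finset.sum_add_distrib, ← Finset.mul_sum, ← Finset.mul_sum, he0t, mul_one]
      rw [e1, ptrRight_sv, ← Matrix.kronecker_smul, ← Matrix.kronecker_add, Matrix.smul_kronecker,
        ← Matrix.kronecker_smul]
      congr 1
      simp only [Y, smul_sub, smul_smul]
      have : (1 / 2 : ℂ) * ((2 * p : ℝ) : ℂ) = (p : ℂ) := by push_cast; ring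
      rw [this]
      abel
    · intro U hU
      ext b b'
      rw [target_apply]
      have := actB_decomp (outer (sv ψ)) (fun (_ : Unit) => sv ψ) (by
        intro x y; simp [outer, Matrix.vecMulVec_apply]) U b b'
      simp only [Finset.univ_unique, Finset.sum_singleton, sv_lin ψ U hU] at this
      rw [← this, actB_apply', actB_apply']
      simp only [Matrix.smul_apply, smul_eq_mul, Finset.mul_sum, mul_assoc]
  · rintro p ⟨S, Sch, ⟨hS, hSS, σ, hσ, hσt, hch⟩, hact⟩
    have hform := two_struct ψ hψ S hS p hact
    have h1 := ptrRight_psd hSS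
    have e1 : ptrRight (Sch - S) = σ ⊗ₖ (1 : Matrix (Fin 2) (Fin 2) ℂ) -
        (p : ℂ) • ((1 : Matrix (Fin 2) (Fin 2) ℂ) ⊗ₖ (Em * M * Emᴴ)) := by
      rw [← ptrRight_sv, ← hch, hform]
      ext x y
      simp [ptrRight, Finset.mul_sum]
    rw [e1] at h1
    have h2 := (h1.submatrix (fun O : Fin 2 => ((0 : Fin 2), O))).add
      (h1.submatrix (fun O : Fin 2 => ((1 : Fin 2), O)))
    have e2 : (1 - ((2 * p : ℝ) : ℂ) • (Em * M * Emᴴ)).PosSemidef := by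
      convert h2 using 1
      rw [Matrix.trace_fin_two] at hσt
      ext i j
      simp only [Matrix.sub_apply, Matrix.add_apply, Matrix.submatrix_apply, Matrix.smul_apply,
        Matrix.kroneckerMap_apply, Matrix.one_apply_eq, smul_eq_mul, one_mul]
      push_cast
      linear_combination (-(1 : Matrix (Fin 2) (Fin 2) ℂ) i j) * hσt
    rw [← rotE] at e2
    have h3 := hB _ e2
    rw [le_div_iff₀ (by positivity)]
    linarith

/-- **Probabilistic exact unitary inversion on part of a known bipartite pure state,
single call.** For `d > 2` every protocol implementing
`U ↦ p · (1_m ⊗ U†)|ψ⟩⟨ψ|(1_m ⊗ U†)†` for all `U ∈ SU(d)` has `p = 0`; for `d = 2`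
the greatest achievable `p` is `1/(2 · λ_max(Tr_A |ψ⟩⟨ψ|))`, and it is attained. -/
theorem bipartite_inversion_single_call
    (d m : ℕ) (hd : 2 ≤ d) (hm : 1 ≤ m)
    (ψ : Fin m × Fin d → ℂ) (hψ : star ψ ⬝ᵥ ψ = 1) :
    (2 < d →
      ∀ (S Sch : Matrix ((Fin d × Fin d) × (Fin m × Fin d))
          ((Fin d × Fin d) × (Fin m × Fin d)) ℂ) (p : ℝ),
        IsProtocolB S Sch →
        (∀ U : Matrix (Fin d) (Fin d) ℂ, U ∈ Matrix.specialUnitaryGroup (Fin d) ℂ →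
          actB S U = (p : ℂ) •
            (((1 : Matrix (Fin m) (Fin m) ℂ) ⊗ₖ Uᴴ) * outer ψ *
              ((1 : Matrix (Fin m) (Fin m) ℂ) ⊗ₖ Uᴴ)ᴴ)) →
        p = 0) ∧
    (d = 2 →
      IsGreatest
        {p : ℝ |
          ∃ S Sch : Matrix ((Fin d × Fin d) × (Fin m × Fin d))
              ((Fin d × Fin d) × (Fin m × Fin d)) ℂ,
            IsProtocolB S Sch ∧
            ∀ U : Matrix (Fin d) (Fin d) ℂ, U ∈ Matrix.specialUnitaryGroup (Fin d) ℂ →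
              actB S U = (p : ℂ) •
                (((1 : Matrix (Fin m) (Fin m) ℂ) ⊗ₖ Uᴴ) * outer ψ *
                  ((1 : Matrix (Fin m) (Fin m) ℂ) ⊗ₖ Uᴴ)ᴴ)}
        (1 / (2 * lamMax (ptrLeft (outer ψ))))) := by
  refine ⟨fun h S Sch p hP hact => big_case h ψ hψ S hP.1 p hact, fun h => ?_⟩
  subst h
  exact two_case hm ψ hψ
end
end

section
/- Fix an integer d ≥ 2, a unit vector ψ ∈ ℂ^d, and η ∈ [0,1], and set ρ := η|ψ⟩⟨ψ| + ((1−η)/d)·1_d. There exists a single-call deterministic superchannel S satisfying S ⋆ U = Uᵀ ρ U̅ for every U ∈ SU(d) (deterministic and exact unitary transposition on the known mixed state ρ) if and only if η ≤ d/(d²−1). -/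
open Matrix Kronecker BigOperators ComplexOrder

noncomputable section

/-- Action `S ⋆ U := Tr_{IO}[ S · (|U̅⟩⟩⟨⟨U̅|_{IO} ⊗ 1_F) ]` of a single-call
supermap `S` on `I ⊗ O ⊗ F` applied to the unitary channel given by `U`. -/
def act {d dF : ℕ}
    (S : Matrix ((Fin d × Fin d) × Fin dF) ((Fin d × Fin d) × Fin dF) ℂ)
    (U : Matrix (Fin d) (Fin d) ℂ) : Matrix (Fin dF) (Fin dF) ℂ :=
  ptrLeft (S * (choiProj (mconj U) ⊗ₖ (1 : Matrix (Fin dF) (Fin dF) ℂ)))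

/-- A single-call deterministic superchannel (channels-to-states):
`S ≥ 0` with `Tr_F(S) = σ ⊗ 1_d`, `σ ≥ 0`, `Tr σ = 1`. -/
def IsSuperchannel {d dF : ℕ}
    (S : Matrix ((Fin d × Fin d) × Fin dF) ((Fin d × Fin d) × Fin dF) ℂ) : Prop :=
  S.PosSemidef ∧
    ∃ σ : Matrix (Fin d) (Fin d) ℂ, σ.PosSemidef ∧ σ.trace = 1 ∧
      ptrRight S = σ ⊗ₖ (1 : Matrix (Fin d) (Fin d) ℂ)

lemma phase_extract {d : ℕ} (G : Fin d → Fin d → ℂ)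
    (h : ∀ z : Fin d → ℂ, (∀ i, z i * star (z i) = 1) →
      ∑ j, ∑ l, z j * star (z l) * G j l = 0) (j l : Fin d) (hjl : j ≠ l) : G j l = 0 := by
  classical
  set B : (Fin d → ℂ) → (Fin d → ℂ) → ℂ := fun x y => ∑ j, ∑ l, x j * star (y l) * G j l with hB
  have hadd : ∀ r : Fin d → ℂ, ∀ e : Fin d → ℂ, ∀ w : ℂ, B (r + w • e) (r + w • e)
      = B r r + w * B e r + star w * B r e + w * star w * B e e := by
    intro r e w
    simp only [hB, Pi.add_apply, Pi.smul_apply, smul_eq_mul, star_add, star_mul', Finset.mul_sum,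
      ← Finset.sum_add_distrib]
    refine Finset.sum_congr rfl fun i _ => Finset.sum_congr rfl fun k _ => ?_
    ring
  have key : ∀ z : Fin d → ℂ, (∀ i, z i * star (z i) = 1) →
      B (Pi.single j 1) (Function.update z j 0) = 0 := by
    intro z hz
    set r := Function.update z j 0 with hr
    have hw : ∀ w : ℂ, w * star w = 1 →
        B r r + w * B (Pi.single j 1) r + star w * B r (Pi.single j 1)
          + w * star w * B (Pi.single j 1) (Pi.single j 1) = 0 := by
      intro w hw
      rw [← hadd]
      apply h
      intro i
      by_cases hi : i = j
      · subst hi; simpa [hr] using hw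
      · simpa [hr, hi, Pi.single_apply] using hz i
    have h1 := hw 1 (by simp)
    have h2 := hw (-1) (by simp)
    have h3 := hw Complex.I (by simp)
    have h4 := hw (-Complex.I) (by simp)
    simp only [star_one, star_neg, Complex.star_def, Complex.conj_I] at h1 h2 h3 h4
    have hI := Complex.I_mul_I
    linear_combination (1/4) * h1 - (1/4) * h2 - (Complex.I/4) * h3 + (Complex.I/4) * h4
      + (-1/2 * B r (Pi.single j 1) + 1/2 * B (Pi.single j 1) r) * hI
  have hB1 : ∀ y, B (Pi.single j 1) y = ∑ l, star (y l) * G j l := by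
    intro y
    simp [hB, Pi.single_apply]
  have k1 := key (fun _ => 1) (by simp)
  have k2 := key (Function.update (fun _ => 1) l (-1)) (by
    intro i
    by_cases hi : i = l
    · subst hi; simp
    · simp [hi])
  rw [hB1] at k1 k2
  have : ∑ i, (star (Function.update (fun _ => (1:ℂ)) j 0 i) * G j i
      - star (Function.update (Function.update (fun _ => (1:ℂ)) l (-1)) j 0 i) * G j i) = 0 := by
    rw [Finset.sum_sub_distrib, k1, k2, sub_zero]
  rw [Fintype.sum_eq_single l] at this
  · simp [hjl.symm] at this
    exact this
  · intro i hi
    by_cases hij : i = j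
    · subst hij; simp
    · simp [hi, hij]

lemma form_extract {d : ℕ} (A : Fin d → Fin d → Fin d → Fin d → ℂ)
    (h : ∀ U ∈ Matrix.unitaryGroup (Fin d) ℂ,
      ∑ j, ∑ l, ∑ k, ∑ m, A j k l m * U k j * star (U m l) = 0)
    (U : Matrix (Fin d) (Fin d) ℂ) (hU : U ∈ Matrix.unitaryGroup (Fin d) ℂ) :
    (∀ j l, j ≠ l → ∑ k, ∑ m, A j k l m * U k j * star (U m l) = 0) ∧
    ∑ j, ∑ k, ∑ m, A j k j m * U k j * star (U m j) = 0 := by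
  classical
  have h1 : ∀ j l, j ≠ l → ∑ k, ∑ m, A j k l m * U k j * star (U m l) = 0 := by
    refine phase_extract (fun j l => ∑ k, ∑ m, A j k l m * U k j * star (U m l)) ?_
    intro z hz
    have := h (U * Matrix.diagonal z) (mul_mem hU (by
      rw [Matrix.mem_unitaryGroup_iff, Matrix.star_eq_conjTranspose, Matrix.diagonal_conjTranspose,
        Matrix.diagonal_mul_diagonal, ← Matrix.diagonal_one]
      congr 1
      funext i
      exact hz i))
    rw [← this]
    refine Finset.sum_congr rfl fun j _ => Finset.sum_congr rfl fun l _ => ?_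
    simp only [Matrix.mul_diagonal, Finset.mul_sum, star_mul']
    refine Finset.sum_congr rfl fun k _ => Finset.sum_congr rfl fun m _ => ?_
    ring
  refine ⟨h1, ?_⟩
  rw [← h U hU]
  refine Finset.sum_congr rfl fun j _ => ?_
  exact (Fintype.sum_eq_single j fun l hl => h1 j l hl.symm).symm

lemma exists_unitary_cols {d : ℕ} (u v : Fin d → ℂ) (hu : ∑ i, u i * star (u i) = 1)
    (hv : ∑ i, v i * star (v i) = 1) (huv : ∑ i, u i * star (v i) = 0) (j l : Fin d)
    (hjl : j ≠ l) :
    ∃ U ∈ Matrix.unitaryGroup (Fin d) ℂ, (∀ k, U k j = u k) ∧ (∀ k, U k l = v k) := by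
  classical
  have hvu : ∑ i, v i * star (u i) = 0 := by
    have := congrArg star huv
    simpa [star_sum, mul_comm] using this
  let w : Fin d → EuclideanSpace ℂ (Fin d) := fun i =>
    if i = j then WithLp.toLp 2 u else WithLp.toLp 2 v
  have hw : Orthonormal ℂ (({j, l} : Set (Fin d)).domRestrict w) := by
    rw [orthonormal_iff_ite]
    rintro ⟨a, ha⟩ ⟨b, hb⟩
    rcases ha with rfl | ha <;> rcases hb with rfl | hb
    · simpa [w, PiLp.inner_apply, -inner_self_eq_norm_sq_to_K] using hu
    · obtain rfl : b = l := hb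
      simpa [w, PiLp.inner_apply, hjl, hjl.symm, Subtype.ext_iff] using hvu
    · obtain rfl : a = l := ha
      simpa [w, PiLp.inner_apply, hjl, hjl.symm, Subtype.ext_iff] using huv
    · obtain rfl : a = l := ha
      obtain rfl : b = a := hb
      simpa [w, PiLp.inner_apply, hjl, hjl.symm, -inner_self_eq_norm_sq_to_K] using hv
  obtain ⟨b, hb⟩ := hw.exists_orthonormalBasis_extension_of_card_eq (by simp)
  refine ⟨(EuclideanSpace.basisFun (Fin d) ℂ).toBasis.toMatrix b,
    (EuclideanSpace.basisFun (Fin d) ℂ).toMatrix_orthonormalBasis_mem_unitary b, ?_, ?_⟩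
  · intro k
    simp [Module.Basis.toMatrix_apply, hb j (by simp), w]
  · intro k
    simp [Module.Basis.toMatrix_apply, hb l (by simp), w, hjl.symm]

lemma perm_unitary {d : ℕ} (π : Equiv.Perm (Fin d)) :
    (Matrix.of fun k j => if k = π j then (1:ℂ) else 0) ∈ Matrix.unitaryGroup (Fin d) ℂ := by
  classical
  rw [Matrix.mem_unitaryGroup_iff', Matrix.star_eq_conjTranspose]
  ext a b
  simp [Matrix.mul_apply, Matrix.one_apply, eq_comm]

lemma form_offdiag {d : ℕ} (A : Fin d → Fin d → Fin d → Fin d → ℂ)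
    (h : ∀ U ∈ Matrix.unitaryGroup (Fin d) ℂ,
      ∑ j, ∑ l, ∑ k, ∑ m, A j k l m * U k j * star (U m l) = 0)
    (j l k m : Fin d) (hjl : j ≠ l) (hkm : k ≠ m) : A j k l k = A j m l m := by
  classical
  have gen : ∀ u v : Fin d → ℂ, ∑ i, u i * star (u i) = 1 → ∑ i, v i * star (v i) = 1 →
      ∑ i, u i * star (v i) = 0 → ∑ k, ∑ m, A j k l m * u k * star (v m) = 0 := by
    intro u v hu hv huv
    obtain ⟨U, hU, h1, h2⟩ := exists_unitary_cols u v hu hv huv j l hjl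
    simpa only [h1, h2] using (form_extract A h U hU).1 j l hjl
  have two : ∀ f : Fin d → ℂ, (∀ x, x ≠ k ∧ x ≠ m → f x = 0) → ∑ x, f x = f k + f m :=
    fun f hf => Fintype.sum_eq_add k m hkm hf
  have gen2 : ∀ a b p q : ℂ, a * star a + b * star b = 1 → p * star p + q * star q = 1 →
      a * star p + b * star q = 0 →
      A j k l k * a * star p + A j k l m * a * star q
        + (A j m l k * b * star p + A j m l m * b * star q) = 0 := by
    intro a b p q h1 h2 h3
    have e : ∀ a b : ℂ, ∀ x, x ≠ k ∧ x ≠ m → (if x = k then a else if x = m then b else 0) = 0 := by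
      intro a b x hx; simp [hx.1, hx.2]
    have := gen (fun x => if x = k then a else if x = m then b else 0)
      (fun x => if x = k then p else if x = m then q else 0)
      (by rw [two]; · simpa [hkm.symm] using h1
          · intro x hx; simp [hx.1, hx.2])
      (by rw [two]; · simpa [hkm.symm] using h2
          · intro x hx; simp [hx.1, hx.2])
      (by rw [two]; · simpa [hkm.symm] using h3
          · intro x hx; simp [hx.1, hx.2])
    rw [two, two, two] at this
    · simpa [hkm.symm] using this
    · intro x hx; simp [hx.1, hx.2]
    · intro x hx; simp [hx.1, hx.2]
    · intro x hx; simp [hx.1, hx.2]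
  have g1 := gen2 1 0 0 1 (by simp) (by simp) (by simp)
  have g2 := gen2 0 1 1 0 (by simp) (by simp) (by simp)
  have g3 := gen2 (3/5) (4/5) (4/5) (-3/5) (by simp; norm_num) (by simp; norm_num)
    (by simp; norm_num)
  simp at g1 g2 g3
  rw [g1, g2] at g3
  linear_combination (25/12) * g3

lemma form_diag {d : ℕ} (A : Fin d → Fin d → Fin d → Fin d → ℂ)
    (h : ∀ U ∈ Matrix.unitaryGroup (Fin d) ℂ,
      ∑ j, ∑ l, ∑ k, ∑ m, A j k l m * U k j * star (U m l) = 0)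
    (j l k m : Fin d) (hjl : j ≠ l) (hkm : k ≠ m) :
    A j k j k - A j m j m = A l k l k - A l m l m := by
  classical
  have hp : ∀ π : Equiv.Perm (Fin d), ∑ i, A i (π i) i (π i) = 0 := by
    intro π
    simpa using (form_extract A h _ (perm_unitary π)).2
  obtain ⟨π, h1, h2⟩ : ∃ π : Equiv.Perm (Fin d), π j = k ∧ π l = m := by
    refine ⟨Equiv.swap (Equiv.swap j k l) m * Equiv.swap j k, ?_, ?_⟩
    · simp only [Equiv.Perm.mul_apply, Equiv.swap_apply_left]
      apply Equiv.swap_apply_of_ne_of_ne _ hkm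
      intro hh
      apply hjl
      apply (Equiv.swap j k).injective
      rw [← hh, Equiv.swap_apply_left]
    · simp
  have e1 := hp π
  have e2 := hp (π * Equiv.swap j l)
  have : ∑ i, (A i (π i) i (π i) - A i ((π * Equiv.swap j l) i) i ((π * Equiv.swap j l) i)) = 0 := by
    rw [Finset.sum_sub_distrib, e1, e2, sub_zero]
  rw [Fintype.sum_eq_add j l hjl] at this
  · simp [h1, h2] at this
    linear_combination this
  · rintro x ⟨hx1, hx2⟩
    simp [Equiv.swap_apply_of_ne_of_ne hx1 hx2]

lemma psd_sum_nonneg {d : ℕ} (M : Matrix (Fin d) (Fin d) ℂ) (hM : M.PosSemidef) :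
    0 ≤ (∑ b, ∑ c, M b c).re := by
  have := hM.dotProduct_mulVec_nonneg (fun _ => 1)
  simp [dotProduct, Matrix.mulVec] at this
  exact (Complex.le_def.1 this).1

lemma psd_sum_le {d : ℕ} (M : Matrix (Fin d) (Fin d) ℂ) (hM : M.PosSemidef) :
    (∑ b, ∑ c, M b c).re ≤ d * ∑ b, (M b b).re := by
  classical
  have h : ∀ b c, (M b c).re + (M c b).re ≤ (M b b).re + (M c c).re := by
    intro b c
    have := (Complex.le_def.1
      (hM.dotProduct_mulVec_nonneg (Pi.single b 1 - Pi.single c 1))).1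
    simp [Matrix.mulVec_sub, sub_dotProduct, dotProduct_sub] at this
    linarith
  have h2 := Finset.sum_le_sum fun b (_ : b ∈ Finset.univ) =>
    Finset.sum_le_sum fun c (_ : c ∈ Finset.univ) => h b c
  simp only [Finset.sum_add_distrib] at h2
  rw [Finset.sum_comm (f := fun b c => (M c b).re)] at h2
  simp only [Finset.sum_const, Finset.card_univ, Fintype.card_fin, nsmul_eq_mul,
    ← Finset.mul_sum] at h2
  simp only [Complex.re_sum]
  linarith

lemma core {d : ℕ} (S : Matrix ((Fin d × Fin d) × Fin d) ((Fin d × Fin d) × Fin d) ℂ)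
    (hS : S.PosSemidef) (σ : Matrix (Fin d) (Fin d) ℂ) (hσ : σ.trace = 1)
    (hp : ∀ j k l m, ∑ b, S ((j, k), b) ((l, m), b) = σ j l * (if k = m then 1 else 0))
    (r : Fin d → ℝ)
    (h : ∀ U ∈ Matrix.unitaryGroup (Fin d) ℂ, ∀ b b',
      ∑ j, ∑ l, ∑ k, ∑ m, S ((j, k), b) ((l, m), b') * U k j * star (U m l)
        = ∑ k, (r k : ℂ) * U k b * star (U k b')) (x y : Fin d) (hxy : x ≠ y) :
    (r x - r y) * ((d:ℝ) ^ 2 - 1) ≤ d := by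
  classical
  set T : Fin d → Fin d → Fin d → Fin d → Fin d → Fin d → ℂ := fun b b' j k l m =>
    S ((j, k), b) ((l, m), b') - (if k = m then (if l = b' then (if j = b then (r k : ℂ) else 0)
      else 0) else 0) with hT
  have hTU : ∀ b b', ∀ U ∈ Matrix.unitaryGroup (Fin d) ℂ,
      ∑ j, ∑ l, ∑ k, ∑ m, T b b' j k l m * U k j * star (U m l) = 0 := by
    intro b b' U hU
    simp only [hT, sub_mul, Finset.sum_sub_distrib, h U hU b b']
    have e : ∀ j l, ∑ k, ∑ m, (if k = m then (if l = b' then (if j = b then (r k : ℂ) else 0)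
        else 0) else 0) * U k j * star (U m l) =
        if l = b' then (if j = b then ∑ k, (r k : ℂ) * U k b * star (U k b') else 0) else 0 := by
      intro j l
      by_cases h1 : l = b'
      · by_cases h2 : j = b
        · subst h1 h2; simp
        · simp [h2]
      · simp [h1]
    simp
  set δ : ℂ := (r x : ℂ) - r y with hδ
  have off : ∀ b b', b ≠ b' →
      S ((b, x), b) ((b', x), b') - S ((b, y), b) ((b', y), b') = δ := by
    intro b b' hb
    have := form_offdiag (T b b') (hTU b b') b b' x y hb hxy
    simp only [hT, if_true] at this
    linear_combination this
  set D : Fin d → Fin d → ℂ := fun j b => S ((j, x), b) ((j, x), b) - S ((j, y), b) ((j, y), b)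
    with hD
  have dg : ∀ j b, D j b = D b b - δ + (if j = b then δ else 0) := by
    intro j b
    by_cases hj : j = b
    · subst hj; simp
    · have := form_diag (T b b) (hTU b b) j b x y hj hxy
      simp only [hT, if_true, if_neg hj] at this
      simp only [if_neg hj, hD]
      linear_combination this
  have hD0 : ∑ j, ∑ b, D j b = 0 := by
    refine Finset.sum_eq_zero fun j _ => ?_
    simp [hD, Finset.sum_sub_distrib, hp]
  have hDd : (d : ℂ) * ∑ b, D b b = d * ((d - 1) * δ) := by
    rw [Finset.sum_comm] at hD0
    have e : ∀ b, ∑ j, D j b = d * (D b b - δ) + δ := by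
      intro b
      rw [Finset.sum_congr rfl fun j _ => dg j b]
      simp [Finset.sum_add_distrib, mul_sub]
    simp only [e, Finset.sum_add_distrib, ← Finset.mul_sum, Finset.sum_sub_distrib] at hD0
    simp at hD0
    linear_combination hD0
  have hd0 : (d : ℂ) ≠ 0 := by
    have : 0 < d := x.pos
    exact_mod_cast this.ne'
  have hDs : ∑ b, D b b = (d - 1) * δ := mul_left_cancel₀ hd0 hDd
  have hX : (∑ b, ∑ c, S ((b, x), b) ((c, x), c)) - (∑ b, ∑ c, S ((b, y), b) ((c, y), c))
      = (d ^ 2 - 1) * δ := by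
    have e : ∀ b c, S ((b, x), b) ((c, x), c) - S ((b, y), b) ((c, y), c)
        = δ + (if b = c then D b b - δ else 0) := by
      intro b c
      by_cases hb : b = c
      · subst hb; simp [hD]
      · simp [hb, off b c hb]
    simp only [← Finset.sum_sub_distrib, e]
    simp only [Finset.sum_add_distrib, Finset.sum_ite_eq, Finset.mem_univ, if_true,
      Finset.sum_sub_distrib, hDs]
    simp
    ring
  have n1 := psd_sum_nonneg _ (hS.submatrix (fun b : Fin d => ((b, y), b)))
  have n2 := psd_sum_le _ (hS.submatrix (fun b : Fin d => ((b, x), b)))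
  simp only [Matrix.submatrix_apply] at n1 n2
  have n3 : ∑ b, (S ((b, x), b) ((b, x), b)).re ≤ 1 := by
    have t : ∑ j, ∑ b, S ((j, x), b) ((j, x), b) = 1 := by
      simp only [hp]
      simpa [Matrix.trace] using hσ
    have t2 := congrArg Complex.re t
    simp only [Complex.re_sum, Complex.one_re] at t2
    rw [← t2]
    refine Finset.sum_le_sum fun j _ => ?_
    exact Finset.single_le_sum (f := fun b => (S ((j, x), b) ((j, x), b)).re)
      (fun b _ => (Complex.le_def.1 hS.diag_nonneg).1) (Finset.mem_univ j)
  have hXr := congrArg Complex.re hX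
  have hδr : ((d ^ 2 - 1) * δ : ℂ) = (((r x - r y) * ((d:ℝ) ^ 2 - 1) : ℝ) : ℂ) := by
    rw [hδ]; push_cast; ring
  rw [hδr, Complex.ofReal_re, Complex.sub_re] at hXr
  have : (d:ℝ) * ∑ b, (S ((b, x), b) ((b, x), b)).re ≤ d * 1 :=
    mul_le_mul_of_nonneg_left n3 (Nat.cast_nonneg d)
  linarith

lemma exists_unitary_col {d : ℕ} (u : Fin d → ℂ) (hu : ∑ i, u i * star (u i) = 1) (j : Fin d) :
    ∃ U ∈ Matrix.unitaryGroup (Fin d) ℂ, (∀ k, U k j = u k) := by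
  classical
  let w : Fin d → EuclideanSpace ℂ (Fin d) := fun _ => WithLp.toLp 2 u
  have hw : Orthonormal ℂ (({j} : Set (Fin d)).domRestrict w) := by
    rw [orthonormal_iff_ite]
    rintro ⟨a, ha⟩ ⟨b, hb⟩
    obtain rfl : a = j := ha
    obtain rfl : b = a := hb
    simpa [w, PiLp.inner_apply, -inner_self_eq_norm_sq_to_K] using hu
  obtain ⟨b, hb⟩ := hw.exists_orthonormalBasis_extension_of_card_eq (by simp)
  refine ⟨(EuclideanSpace.basisFun (Fin d) ℂ).toBasis.toMatrix b,
    (EuclideanSpace.basisFun (Fin d) ℂ).toMatrix_orthonormalBasis_mem_unitary b, ?_⟩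
  intro k
  simp [Module.Basis.toMatrix_apply, hb j (by simp), w]

lemma act_apply {d : ℕ} (S : Matrix ((Fin d × Fin d) × Fin d) ((Fin d × Fin d) × Fin d) ℂ)
    (U : Matrix (Fin d) (Fin d) ℂ) (b b' : Fin d) :
    act S U b b' =
      ∑ j, ∑ l, ∑ k, ∑ m, S ((j, k), b) ((l, m), b') * U k j * star (U m l) := by
  simp only [act, ptrLeft, Matrix.mul_apply, Fintype.sum_prod_type, Matrix.kroneckerMap_apply,
    choiProj, outer, choiVec, mconj, Matrix.vecMulVec_apply, Matrix.one_apply, Pi.star_apply,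
    Matrix.map_apply]
  refine Finset.sum_congr rfl fun j _ => ?_
  rw [Finset.sum_comm]
  refine Finset.sum_congr rfl fun l _ => Finset.sum_congr rfl fun k _ =>
    Finset.sum_congr rfl fun m _ => ?_
  simp
  ring

lemma mconj_mul {d : ℕ} (A B : Matrix (Fin d) (Fin d) ℂ) : mconj (A * B) = mconj A * mconj B := by
  simp [mconj, Matrix.map_mul]

lemma act_smul_phase {d : ℕ}
    (S : Matrix ((Fin d × Fin d) × Fin d) ((Fin d × Fin d) × Fin d) ℂ)
    (ρ : Matrix (Fin d) (Fin d) ℂ) (hd : d ≠ 0)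
    (h : ∀ U ∈ Matrix.specialUnitaryGroup (Fin d) ℂ, act S U = Uᵀ * ρ * mconj U)
    (U : Matrix (Fin d) (Fin d) ℂ) (hU : U ∈ Matrix.unitaryGroup (Fin d) ℂ) :
    act S U = Uᵀ * ρ * mconj U := by
  obtain ⟨c, hc⟩ := IsAlgClosed.exists_pow_nat_eq U.det (Nat.pos_of_ne_zero hd)
  have hdet := Matrix.det_of_mem_unitary hU
  have hn : ‖U.det‖ = 1 := by
    have h1 := (Unitary.mem_iff.1 hdet).1
    have h2 := congrArg norm h1
    rw [norm_mul, norm_star, norm_one] at h2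
    nlinarith [norm_nonneg U.det]
  have hcn : ‖c‖ = 1 := by
    rw [← hc, norm_pow] at hn
    exact (pow_eq_one_iff_of_nonneg (norm_nonneg c) hd).1 hn
  have hcc : star c * c = 1 := by
    rw [Complex.star_def, ← Complex.normSq_eq_conj_mul_self, Complex.normSq_eq_norm_sq, hcn]; simp
  have hcc' : c * star c = 1 := by rw [mul_comm]; exact hcc
  have hmem : star c • U ∈ Matrix.specialUnitaryGroup (Fin d) ℂ := by
    rw [Matrix.mem_specialUnitaryGroup_iff]
    constructor
    · rw [Matrix.mem_unitaryGroup_iff] at hU ⊢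
      rw [star_smul, star_star, smul_mul_smul_comm, hU, hcc, one_smul]
    · rw [Matrix.det_smul, Fintype.card_fin, ← hc, ← mul_pow, hcc, one_pow]
  have := h _ hmem
  have e1 : act S (star c • U) = act S U := by
    ext b b'
    simp only [act_apply]
    refine Finset.sum_congr rfl fun j _ => Finset.sum_congr rfl fun l _ =>
      Finset.sum_congr rfl fun k _ => Finset.sum_congr rfl fun m _ => ?_
    simp only [Matrix.smul_apply, smul_eq_mul, star_mul', star_star]
    linear_combination (S ((j, k), b) ((l, m), b') * U k j * star (U m l)) * hcc
  have e2 : mconj (star c • U) = c • mconj U := by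
    ext i j; simp [mconj]
  rw [e1, e2, Matrix.transpose_smul, Matrix.smul_mul, Matrix.smul_mul, Matrix.mul_smul, smul_smul,
    hcc, one_smul] at this
  exact this

lemma necessity (d : ℕ) (hd : 2 ≤ d) (ψ : Fin d → ℂ) (hψ : star ψ ⬝ᵥ ψ = 1) (η : ℝ)
    (S : Matrix ((Fin d × Fin d) × Fin d) ((Fin d × Fin d) × Fin d) ℂ) (hS : IsSuperchannel S)
    (h : ∀ U : Matrix (Fin d) (Fin d) ℂ, U ∈ Matrix.specialUnitaryGroup (Fin d) ℂ →
          act S U =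
            Uᵀ * ((η : ℂ) • outer ψ + (((1 - η) / d : ℝ) : ℂ) • (1 : Matrix (Fin d) (Fin d) ℂ)) * mconj U) :
    η ≤ (d : ℝ) / ((d : ℝ) ^ 2 - 1) := by
  classical
  obtain ⟨hpsd, σ, hσ, htr, hp⟩ := hS
  set ρ := ((η : ℂ) • outer ψ + (((1 - η) / d : ℝ) : ℂ) • (1 : Matrix (Fin d) (Fin d) ℂ)) with hρ
  have hU := act_smul_phase S ρ (by omega) h
  let x : Fin d := ⟨0, by omega⟩
  let y : Fin d := ⟨1, by omega⟩
  have hxy : x ≠ y := by simp [x, y]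
  obtain ⟨V, hV, hVx⟩ := exists_unitary_col (star ψ) (by
    simpa [dotProduct, mul_comm] using hψ) x
  have hVV := Matrix.mem_unitaryGroup_iff'.1 hV
  have hVe : ∀ k m, ∑ o, V o k * star (V o m) = if k = m then 1 else 0 := by
    intro k m
    have := congrFun (congrFun hVV m) k
    rw [Matrix.mul_apply, Matrix.one_apply] at this
    simp only [Matrix.star_apply] at this
    simp only [eq_comm (a := k)]
    rw [← this]
    exact Finset.sum_congr rfl fun o _ => mul_comm _ _
  set r : Fin d → ℝ := fun k => (if k = x then η else 0) + (1 - η) / d with hr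
  have hVρ : Vᵀ * ρ * mconj V = Matrix.diagonal (fun k => (r k : ℂ)) := by
    have hv1 : Vᵀ *ᵥ ψ = Pi.single x 1 := by
      funext k
      have := hVe k x
      simp only [hVx, Pi.star_apply, star_star] at this
      simpa [Matrix.mulVec, dotProduct, Pi.single_apply] using this
    have hv2 : star ψ ᵥ* mconj V = Pi.single x 1 := by
      have := congrArg star hv1
      have e : (Vᵀ)ᴴ = mconj V := by ext; simp [mconj]
      rw [Matrix.star_mulVec, e] at this
      rw [this]
      funext k
      by_cases hk : k = x <;> simp [hk, Pi.single_apply]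
    have hv3 : Vᵀ * mconj V = 1 := by
      ext k m
      simpa [Matrix.mul_apply, mconj, Matrix.one_apply] using hVe k m
    rw [hρ, Matrix.mul_add, Matrix.add_mul, Matrix.mul_smul, Matrix.smul_mul, Matrix.mul_smul,
      Matrix.smul_mul, Matrix.mul_one, hv3, outer, Matrix.mul_vecMulVec, Matrix.vecMulVec_mul,
      hv1, hv2]
    ext k m
    by_cases hkm : k = m
    · subst hkm
      by_cases hk : k = x <;> simp [hr, hk, Matrix.vecMulVec_apply]
    · by_cases hk : k = x
      · have : m ≠ x := fun hh => hkm (hk.trans hh.symm)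
        simp [hkm, Matrix.vecMulVec_apply, this]
      · simp [hkm, hk, Matrix.vecMulVec_apply]
  let K : Matrix ((Fin d × Fin d) × Fin d) ((Fin d × Fin d) × Fin d) ℂ :=
    Matrix.of fun p q => if p.1.1 = q.1.1 then (if p.2 = q.2 then star (V p.1.2 q.1.2) else 0) else 0
  have hS' : ∀ j k b l m b', (Kᴴ * S * K) ((j, k), b) ((l, m), b') =
      ∑ o', ∑ o, V o k * S ((j, o), b) ((l, o'), b') * star (V o' m) := by
    intro j k b l m b'
    simp [Matrix.mul_apply, Fintype.sum_prod_type, K, Finset.sum_mul, apply_ite, ite_mul]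
  have hcore := core (Kᴴ * S * K) (hpsd.conjTranspose_mul_mul_same K) σ htr ?_ r ?_ x y hxy
  · have hd' : (2:ℝ) ≤ d := by exact_mod_cast hd
    rw [le_div_iff₀ (by nlinarith)]
    simpa [hr, hxy.symm] using hcore
  · intro j k l m
    simp only [hS']
    have hp' : ∀ o o', ∑ b, S ((j, o), b) ((l, o'), b) = σ j l * (if o = o' then 1 else 0) := by
      intro o o'
      have := congrFun (congrFun hp (j, o)) (l, o')
      simpa [ptrRight, Matrix.one_apply] using this
    rw [Finset.sum_comm]
    have e : ∀ o', ∑ b, ∑ o, V o k * S ((j, o), b) ((l, o'), b) * star (V o' m)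
        = σ j l * (V o' k * star (V o' m)) := by
      intro o'
      rw [Finset.sum_comm]
      simp only [← Finset.sum_mul, ← Finset.mul_sum, hp']
      simp
      ring
    simp only [e, ← Finset.mul_sum, hVe]
  · intro U hUU b b'
    have h1 := congrFun (congrFun (hU (V * U) (mul_mem hV hUU)) b) b'
    have h2 : (V * U)ᵀ * ρ * mconj (V * U) = Uᵀ * (Vᵀ * ρ * mconj V) * mconj U := by
      rw [mconj_mul, Matrix.transpose_mul]; simp only [Matrix.mul_assoc]
    rw [h2, hVρ, act_apply] at h1
    have h3 : (Uᵀ * Matrix.diagonal (fun k => (r k : ℂ)) * mconj U) b b' =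
        ∑ k, (r k : ℂ) * U k b * star (U k b') := by
      simp [Matrix.mul_apply, mconj, Matrix.diagonal_apply, mul_comm]
    rw [h3] at h1
    rw [← h1]
    refine Finset.sum_congr rfl fun j _ => Finset.sum_congr rfl fun l _ => ?_
    simp only [hS', Matrix.mul_apply, star_sum, star_mul', Finset.mul_sum, Finset.sum_mul]
    have c4 : ∀ f : Fin d → Fin d → Fin d → Fin d → ℂ,
        ∑ k, ∑ m, ∑ o', ∑ o, f k m o' o = ∑ o, ∑ o', ∑ m, ∑ k, f k m o' o := by
      intro f
      calc ∑ k, ∑ m, ∑ o', ∑ o, f k m o' o = ∑ k, ∑ o', ∑ m, ∑ o, f k m o' o :=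
            Finset.sum_congr rfl fun k _ => Finset.sum_comm
        _ = ∑ o', ∑ k, ∑ m, ∑ o, f k m o' o := Finset.sum_comm
        _ = ∑ o', ∑ m, ∑ k, ∑ o, f k m o' o := Finset.sum_congr rfl fun k _ => Finset.sum_comm
        _ = ∑ o', ∑ m, ∑ o, ∑ k, f k m o' o :=
            Finset.sum_congr rfl fun _ _ => Finset.sum_congr rfl fun _ _ => Finset.sum_comm
        _ = ∑ o', ∑ o, ∑ m, ∑ k, f k m o' o := Finset.sum_congr rfl fun k _ => Finset.sum_comm
        _ = ∑ o, ∑ o', ∑ m, ∑ k, f k m o' o := Finset.sum_comm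
    rw [c4]
    refine Finset.sum_congr rfl fun o _ => Finset.sum_congr rfl fun o' _ =>
      Finset.sum_congr rfl fun k _ => Finset.sum_congr rfl fun m _ => ?_
    ring

lemma one_sub_outer_psd {n : Type*} [Fintype n] [DecidableEq n] (v : n → ℂ) (c : ℝ) (hc : c ≠ 0)
    (hv : star v ⬝ᵥ v = (c : ℂ)) :
    (1 - ((c : ℂ)⁻¹) • outer v : Matrix n n ℂ).PosSemidef := by
  have hc' : (c : ℂ) ≠ 0 := by exact_mod_cast hc
  have hH : (1 - ((c : ℂ)⁻¹) • outer v : Matrix n n ℂ)ᴴ = 1 - ((c : ℂ)⁻¹) • outer v := by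
    rw [Matrix.conjTranspose_sub, Matrix.conjTranspose_smul, Matrix.conjTranspose_one, outer,
      Matrix.conjTranspose_vecMulVec, star_star]
    simp
  have hI : outer v * outer v = (c : ℂ) • outer v := by
    rw [outer, Matrix.vecMulVec_mul_vecMulVec, hv, Matrix.vecMulVec_smul]
  have : (1 - ((c : ℂ)⁻¹) • outer v : Matrix n n ℂ) =
      (1 - ((c : ℂ)⁻¹) • outer v : Matrix n n ℂ)ᴴ * (1 - ((c : ℂ)⁻¹) • outer v) := by
    rw [hH, Matrix.mul_sub, Matrix.sub_mul, Matrix.sub_mul]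
    simp only [Matrix.smul_mul, Matrix.mul_smul, hI, smul_smul, inv_mul_cancel₀ hc', one_smul,
      mul_one, Matrix.one_mul, Matrix.mul_one, mul_assoc]
    simp
  rw [this]
  exact Matrix.posSemidef_conjTranspose_mul_self _

/-- Unnormalised maximally entangled block on `IF` tensored with `X` on `O`. -/
def matE {d : ℕ} (X : Matrix (Fin d) (Fin d) ℂ) :
    Matrix ((Fin d × Fin d) × Fin d) ((Fin d × Fin d) × Fin d) ℂ :=
  Matrix.of fun p q => if p.1.1 = p.2 then (if q.1.1 = q.2 then X p.1.2 q.1.2 else 0) else 0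

/-- Identity on `IF` tensored with `X` on `O`. -/
def matN {d : ℕ} (X : Matrix (Fin d) (Fin d) ℂ) :
    Matrix ((Fin d × Fin d) × Fin d) ((Fin d × Fin d) × Fin d) ℂ :=
  Matrix.of fun p q => if p.1.1 = q.1.1 then (if p.2 = q.2 then X p.1.2 q.1.2 else 0) else 0

lemma matE_psd {d : ℕ} (X : Matrix (Fin d) (Fin d) ℂ) (hX : X.PosSemidef) :
    (matE X).PosSemidef := by
  have h1 : (outer (fun p : Fin d × Fin d => if p.1 = p.2 then (1:ℂ) else 0)).PosSemidef :=
    Matrix.posSemidef_vecMulVec_self_star _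
  have := (h1.kronecker hX).submatrix
    (fun p : (Fin d × Fin d) × Fin d => ((p.1.1, p.2), p.1.2))
  have e : matE X = (Matrix.kroneckerMap (fun a b => a * b) (outer (fun p : Fin d × Fin d => if p.1 = p.2 then (1:ℂ) else 0)) X).submatrix
      (fun p : (Fin d × Fin d) × Fin d => ((p.1.1, p.2), p.1.2))
      (fun p : (Fin d × Fin d) × Fin d => ((p.1.1, p.2), p.1.2)) := by
    ext ⟨⟨j, k⟩, b⟩ ⟨⟨l, m⟩, b'⟩
    by_cases h1 : j = b <;> by_cases h2 : l = b' <;>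
      simp [matE, outer, Matrix.vecMulVec_apply, h1, h2]
  rw [e]
  exact this

lemma matN_psd {d : ℕ} (X : Matrix (Fin d) (Fin d) ℂ) (hX : X.PosSemidef) :
    (matN X).PosSemidef := by
  have := ((Matrix.PosSemidef.one (n := Fin d × Fin d) (R := ℂ)).kronecker hX).submatrix
    (fun p : (Fin d × Fin d) × Fin d => ((p.1.1, p.2), p.1.2))
  have e : matN X = (Matrix.kroneckerMap (fun a b => a * b) ((1 : Matrix (Fin d × Fin d) (Fin d × Fin d) ℂ)) X).submatrix
      (fun p : (Fin d × Fin d) × Fin d => ((p.1.1, p.2), p.1.2))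
      (fun p : (Fin d × Fin d) × Fin d => ((p.1.1, p.2), p.1.2)) := by
    ext ⟨⟨j, k⟩, b⟩ ⟨⟨l, m⟩, b'⟩
    by_cases h1 : j = l <;> by_cases h2 : b = b' <;>
      simp [matN, Matrix.one_apply, h1, h2]
  rw [e]
  exact this

lemma matNE_psd {d : ℕ} (hd : d ≠ 0) (X : Matrix (Fin d) (Fin d) ℂ) (hX : X.PosSemidef) :
    (matN X - ((d : ℂ)⁻¹) • matE X).PosSemidef := by
  have h1 := one_sub_outer_psd (fun p : Fin d × Fin d => if p.1 = p.2 then (1:ℂ) else 0) (d : ℝ)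
    (by exact_mod_cast hd) (by simp [dotProduct, Fintype.sum_prod_type, apply_ite])
  have := (h1.kronecker hX).submatrix
    (fun p : (Fin d × Fin d) × Fin d => ((p.1.1, p.2), p.1.2))
  have e : matN X - ((d : ℂ)⁻¹) • matE X = (Matrix.kroneckerMap (fun a b => a * b) ((1 - ((((d:ℝ) : ℂ))⁻¹) • outer (fun p : Fin d × Fin d => if p.1 = p.2 then (1:ℂ) else 0))) X).submatrix
      (fun p : (Fin d × Fin d) × Fin d => ((p.1.1, p.2), p.1.2))
      (fun p : (Fin d × Fin d) × Fin d => ((p.1.1, p.2), p.1.2)) := by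
    ext ⟨⟨j, k⟩, b⟩ ⟨⟨l, m⟩, b'⟩
    simp only [matN, matE, outer, Matrix.vecMulVec_apply, Matrix.sub_apply, Matrix.smul_apply,
      Matrix.of_apply, Matrix.submatrix_apply, Matrix.kroneckerMap_apply, Matrix.one_apply,
      Prod.mk.injEq, Pi.star_apply, smul_eq_mul, ite_and]
    split_ifs <;> simp [sub_mul]
  rw [e]
  exact this

lemma act_matE {d : ℕ} (X U : Matrix (Fin d) (Fin d) ℂ) : act (matE X) U = Uᵀ * X * mconj U := by
  ext b b'
  rw [act_apply]
  have e : ∀ j l k m, matE X ((j, k), b) ((l, m), b') * U k j * star (U m l) =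
      if j = b then (if l = b' then X k m * U k j * star (U m l) else 0) else 0 := by
    intro j l k m
    simp only [matE, Matrix.of_apply]
    split_ifs <;> simp
  simp only [e]
  have e2 : ∀ j l, (∑ k, ∑ m, if j = b then (if l = b' then X k m * U k j * star (U m l) else 0)
      else 0) = if j = b then (if l = b' then ∑ k, ∑ m, X k m * U k j * star (U m l) else 0) else 0 := by
    intro j l
    split_ifs <;> simp
  simp only [e2, Finset.sum_ite_irrel, Finset.sum_ite_eq', Finset.mem_univ, if_true,
    Finset.sum_const_zero]
  simp only [Matrix.mul_apply, Finset.sum_mul, mconj, Matrix.transpose_apply, Matrix.map_apply]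
  rw [Finset.sum_comm]
  refine Finset.sum_congr rfl fun m _ => Finset.sum_congr rfl fun k _ => ?_
  rw [starRingEnd_apply]
  ring

lemma act_matN {d : ℕ} (X U : Matrix (Fin d) (Fin d) ℂ) (hU : U ∈ Matrix.unitaryGroup (Fin d) ℂ) :
    act (matN X) U = X.trace • 1 := by
  have hUe : ∀ k m, ∑ j, U k j * star (U m j) = if k = m then 1 else 0 := by
    intro k m
    have := congrFun (congrFun (Matrix.mem_unitaryGroup_iff.1 hU) k) m
    simpa [Matrix.mul_apply, Matrix.one_apply] using this
  ext b b'
  rw [act_apply]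
  have e : ∀ j l k m, matN X ((j, k), b) ((l, m), b') * U k j * star (U m l) =
      if j = l then (if b = b' then X k m * (U k j * star (U m j)) else 0) else 0 := by
    intro j l k m
    simp only [matN, Matrix.of_apply]
    split_ifs with h1 h2
    · subst h1; ring
    · simp
    · simp
  simp only [e]
  by_cases hb : b = b'
  · have e2 : ∀ j l, (∑ k, ∑ m, if j = l then X k m * (U k j * star (U m j)) else 0)
      = if j = l then ∑ k, ∑ m, X k m * (U k j * star (U m j)) else 0 := by
      intro j l
      split_ifs <;> simp
    simp only [hb, if_true, e2, Finset.sum_ite_eq, Finset.mem_univ]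
    rw [Finset.sum_comm]
    have e3 : ∀ k, ∑ j, ∑ m, X k m * (U k j * star (U m j)) = X k k := by
      intro k
      rw [Finset.sum_comm]
      simp [← Finset.mul_sum, hUe, -Complex.star_def, -RCLike.star_def]
    rw [Finset.sum_congr rfl fun k _ => e3 k]
    simp [Matrix.trace]
  · simp [hb]

lemma ptr_matE {d : ℕ} (X : Matrix (Fin d) (Fin d) ℂ) :
    ptrRight (matE X) = (1 : Matrix (Fin d) (Fin d) ℂ) ⊗ₖ X := by
  ext ⟨j, k⟩ ⟨l, m⟩
  simp [ptrRight, matE, Matrix.one_apply, eq_comm]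

lemma ptr_matN {d : ℕ} (X : Matrix (Fin d) (Fin d) ℂ) :
    ptrRight (matN X) = (d : ℂ) • ((1 : Matrix (Fin d) (Fin d) ℂ) ⊗ₖ X) := by
  ext ⟨j, k⟩ ⟨l, m⟩
  by_cases h : j = l <;> simp [ptrRight, matN, Matrix.one_apply, h]

lemma act_add {d : ℕ} (S T : Matrix ((Fin d × Fin d) × Fin d) ((Fin d × Fin d) × Fin d) ℂ)
    (U : Matrix (Fin d) (Fin d) ℂ) : act (S + T) U = act S U + act T U := by
  ext b b'
  simp [act_apply, add_mul, Finset.sum_add_distrib]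

lemma act_smul {d : ℕ} (c : ℂ) (S : Matrix ((Fin d × Fin d) × Fin d) ((Fin d × Fin d) × Fin d) ℂ)
    (U : Matrix (Fin d) (Fin d) ℂ) : act (c • S) U = c • act S U := by
  ext b b'
  simp [act_apply, Finset.mul_sum, mul_assoc]

lemma ptr_add {d : ℕ} (S T : Matrix ((Fin d × Fin d) × Fin d) ((Fin d × Fin d) × Fin d) ℂ) :
    ptrRight (S + T) = ptrRight S + ptrRight T := by
  ext b b'
  simp [ptrRight, Finset.sum_add_distrib]

lemma ptr_smul {d : ℕ} (c : ℂ) (S : Matrix ((Fin d × Fin d) × Fin d) ((Fin d × Fin d) × Fin d) ℂ) :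
    ptrRight (c • S) = c • ptrRight S := by
  ext b b'
  simp [ptrRight, Finset.mul_sum]

lemma act_sub {d : ℕ} (S T : Matrix ((Fin d × Fin d) × Fin d) ((Fin d × Fin d) × Fin d) ℂ)
    (U : Matrix (Fin d) (Fin d) ℂ) : act (S - T) U = act S U - act T U := by
  ext b b'
  simp [act_apply, sub_mul, Finset.sum_sub_distrib]

lemma ptr_sub {d : ℕ} (S T : Matrix ((Fin d × Fin d) × Fin d) ((Fin d × Fin d) × Fin d) ℂ) :
    ptrRight (S - T) = ptrRight S - ptrRight T := by
  ext b b'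
  simp [ptrRight, Finset.sum_sub_distrib]

lemma sufficiency (d : ℕ) (hd : 2 ≤ d) (ψ : Fin d → ℂ) (hψ : star ψ ⬝ᵥ ψ = 1) (η : ℝ)
    (hη : 0 ≤ η) (hle : η ≤ (d : ℝ) / ((d : ℝ) ^ 2 - 1)) :
    ∃ S : Matrix ((Fin d × Fin d) × Fin d) ((Fin d × Fin d) × Fin d) ℂ,
        IsSuperchannel S ∧
        ∀ U : Matrix (Fin d) (Fin d) ℂ, U ∈ Matrix.specialUnitaryGroup (Fin d) ℂ →
          act S U =
            Uᵀ * ((η : ℂ) • outer ψ + (((1 - η) / d : ℝ) : ℂ) • (1 : Matrix (Fin d) (Fin d) ℂ)) * mconj U := by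
  have hd' : (2:ℝ) ≤ d := by exact_mod_cast hd
  have hq : 0 < (d:ℝ) ^ 2 - 1 := by nlinarith
  have hdne : (d : ℂ) ≠ 0 := by
    have : d ≠ 0 := by omega
    exact_mod_cast this
  have hqne : (d : ℂ) ^ 2 - 1 ≠ 0 := by
    have := hq.ne'
    exact_mod_cast this
  set t : ℝ := η * ((d:ℝ) ^ 2 - 1) / d with ht
  have ht0 : 0 ≤ t := by positivity
  have ht1 : t ≤ 1 := by
    rw [ht, div_le_one (by linarith)]
    rwa [le_div_iff₀ hq] at hle
  set P := outer ψ with hP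
  have hPpsd : P.PosSemidef := Matrix.posSemidef_vecMulVec_self_star _
  have hQpsd : (1 - P).PosSemidef := by
    simpa using one_sub_outer_psd ψ 1 one_ne_zero (by simpa using hψ)
  have hPtr : P.trace = 1 := by
    rw [hP, outer, Matrix.trace_vecMulVec, dotProduct_comm]; exact hψ
  have nn : ∀ c : ℝ, 0 ≤ c → (0:ℂ) ≤ (c : ℂ) := fun c hc => by exact_mod_cast hc
  refine ⟨((t / d : ℝ) : ℂ) • matE P +
    ((t / ((d:ℝ) ^ 2 - 1) : ℝ) : ℂ) • (matN (1 - P) - ((d : ℂ)⁻¹) • matE (1 - P)) +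
    (((1 - t) / (d:ℝ) ^ 2 : ℝ) : ℂ) • matN 1, ⟨?_, ?_⟩, ?_⟩
  · refine ((Matrix.PosSemidef.smul (matE_psd _ hPpsd) (nn _ (by positivity))).add
      (Matrix.PosSemidef.smul (matNE_psd (by omega) _ hQpsd) (nn _ (by positivity)))).add
      (Matrix.PosSemidef.smul (matN_psd _ Matrix.PosSemidef.one) (nn _ ?_))
    have : 0 ≤ 1 - t := by linarith
    positivity
  · refine ⟨((d⁻¹ : ℝ) : ℂ) • 1, Matrix.PosSemidef.one.smul (nn _ (by positivity)), ?_, ?_⟩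
    · simp [hdne]
    · simp only [ptr_sub, ptr_add, ptr_smul, ptr_matE, ptr_matN]
      ext ⟨j, k⟩ ⟨l, m⟩
      simp only [Matrix.add_apply, Matrix.smul_apply, Matrix.kroneckerMap_apply, Matrix.sub_apply,
        smul_eq_mul]
      push_cast
      field_simp
      ring
  · intro U hU
    have hUu := (Matrix.mem_specialUnitaryGroup_iff.1 hU).1
    have hUU : Uᵀ * mconj U = 1 := by
      have := Matrix.mem_unitaryGroup_iff'.1 hUu
      have h2 := congrArg Matrix.transpose this
      rw [Matrix.transpose_mul, Matrix.transpose_one] at h2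
      exact h2
    simp only [act_sub, act_add, act_smul, act_matE, act_matN _ _ hUu, Matrix.mul_sub, Matrix.sub_mul,
      Matrix.mul_add, Matrix.add_mul, Matrix.mul_smul, Matrix.smul_mul, Matrix.mul_one, hUU,
      Matrix.trace_sub, Matrix.trace_one, hPtr, Fintype.card_fin]
    ext b b'
    simp only [Matrix.add_apply, Matrix.smul_apply, Matrix.sub_apply, smul_eq_mul]
    rw [ht]
    push_cast
    field_simp
    ring

/-- **Deterministic exact unitary transposition on a known mixed state.** With `ρ = η|ψ⟩⟨ψ| + ((1−η)/d)·1`, a single-call deterministic superchannel implementing `U ↦ Uᵀ ρ U̅` for all `U ∈ SU(d)` exists iff `η ≤ d/(d²−1)`. -/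
theorem mixed_state_deterministic_exact_transposition
    (d : ℕ) (hd : 2 ≤ d) (ψ : Fin d → ℂ) (hψ : star ψ ⬝ᵥ ψ = 1)
    (η : ℝ) (hη : η ∈ Set.Icc (0 : ℝ) 1) :
    (∃ S : Matrix ((Fin d × Fin d) × Fin d) ((Fin d × Fin d) × Fin d) ℂ,
        IsSuperchannel S ∧
        ∀ U : Matrix (Fin d) (Fin d) ℂ, U ∈ Matrix.specialUnitaryGroup (Fin d) ℂ →
          act S U =
            Uᵀ * ((η : ℂ) • outer ψ + (((1 - η) / d : ℝ) : ℂ) • (1 : Matrix (Fin d) (Fin d) ℂ)) * mconj U) ↔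
      η ≤ (d : ℝ) / ((d : ℝ) ^ 2 - 1) := by
  exact ⟨fun ⟨S, hS, h⟩ => necessity d hd ψ hψ η S hS h, fun h => sufficiency d hd ψ hψ η hη.1 h⟩
end
end

section
/- Fix an integer d ≥ 2, a unit vector ψ ∈ ℂ^d, and η ∈ [0,1], and set ρ := η|ψ⟩⟨ψ| + ((1−η)/d)·1_d. There exists a single-call deterministic superchannel S satisfying S ⋆ U = U̅ ρ Uᵀ for every U ∈ SU(d) (deterministic and exact unitary complex conjugation on the known mixed state ρ) if and only if d = 2 or η ≤ 1/(d+1). -/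
open Matrix Kronecker BigOperators ComplexOrder

noncomputable section

/-- The operator `X ⊗ (1 + ε SWAP)` on `I ⊗ O ⊗ F`. -/
def mop {d : ℕ} (X : Matrix (Fin d) (Fin d) ℂ) (ε : ℂ) :
    Matrix ((Fin d × Fin d) × Fin d) ((Fin d × Fin d) × Fin d) ℂ :=
  fun p q => X p.1.1 q.1.1 * ((if p.1.2 = q.1.2 then 1 else 0) * (if p.2 = q.2 then 1 else 0) +
    ε * ((if p.1.2 = q.2 then 1 else 0) * (if p.2 = q.1.2 then 1 else 0)))

/-- The sesquilinear form with coefficients `Q`, evaluated at `U`. -/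
def qf {n m : Type*} [Fintype n] [Fintype m] (Q : n → m → n → m → ℂ) (U : Matrix n m ℂ) : ℂ :=
  ∑ o, ∑ i, ∑ o', ∑ i', Q o i o' i' * (U o i * star (U o' i'))

lemma two_rel (Q : Fin 2 → Fin 2 → Fin 2 → Fin 2 → ℂ) (k : ℂ)
    (h : ∀ A : Matrix (Fin 2) (Fin 2) ℂ, A * Aᴴ = 1 → qf Q A = k) :
    Q 0 0 1 1 = 0 ∧ Q 0 0 0 1 = Q 1 0 1 1 ∧ Q 0 0 1 0 = Q 0 1 1 1 ∧
      Q 0 0 0 0 + Q 1 1 1 1 = Q 0 1 0 1 + Q 1 0 1 0 := by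
  have h1 : ∀ z : ℂ, z * star z = 1 → qf Q !![z, 0; 0, 1] = k := by
    intro z hz
    apply h
    ext i j
    fin_cases i <;> fin_cases j <;> simp [Matrix.mul_apply, Fin.sum_univ_two]
    simpa using hz
  have h2 : ∀ z : ℂ, z * star z = 1 → qf Q !![0, z; 1, 0] = k := by
    intro z hz
    apply h
    ext i j
    fin_cases i <;> fin_cases j <;> simp [Matrix.mul_apply, Fin.sum_univ_two]
    simpa using hz
  have h3 : ∀ z w : ℂ, z * star z = 1 → w * star w = 1 →
      qf Q !![3/5, 4/5 * z; 4/5 * w, -(3/5) * (z * w)] = k := by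
    intro z w hz hw
    simp only [RCLike.star_def] at hz hw
    have e3 : (starRingEnd ℂ) 3 = 3 := Complex.conj_ofNat 3
    have e4 : (starRingEnd ℂ) 4 = 4 := Complex.conj_ofNat 4
    have e5 : (starRingEnd ℂ) 5 = 5 := Complex.conj_ofNat 5
    apply h
    ext i j
    fin_cases i <;> fin_cases j <;>
      simp [Matrix.mul_apply, Fin.sum_univ_two, e3, e4, e5]
    · linear_combination (16/25) * hz
    · linear_combination (-12/25 * (starRingEnd ℂ) w) * hz
    · linear_combination (-12/25 * w) * hz
    · linear_combination (16/25 + 9/25 * z * (starRingEnd ℂ) z) * hw + 9/25 * hz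
  have u1 : (1 : ℂ) * star (1 : ℂ) = 1 := by simp
  have u2 : (-1 : ℂ) * star (-1 : ℂ) = 1 := by simp
  have u3 : Complex.I * star Complex.I = 1 := by simp
  have e3 : (starRingEnd ℂ) 3 = 3 := Complex.conj_ofNat 3
  have e4 : (starRingEnd ℂ) 4 = 4 := Complex.conj_ofNat 4
  have e5 : (starRingEnd ℂ) 5 = 5 := Complex.conj_ofNat 5
  have a1 := h1 1 u1
  have a2 := h1 (-1) u2
  have a3 := h1 Complex.I u3
  have b1 := h2 1 u1
  have b2 := h2 (-1) u2
  have b3 := h2 Complex.I u3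
  have c1 := h3 1 1 u1 u1
  have c2 := h3 (-1) 1 u2 u1
  have c3 := h3 Complex.I 1 u3 u1
  have c4 := h3 1 (-1) u1 u2
  have c5 := h3 1 Complex.I u1 u3
  have hI : Complex.I * Complex.I = -1 := Complex.I_mul_I
  simp [qf, Fin.sum_univ_two, e3, e4, e5] at a1 a2 a3 b1 b2 b3 c1 c2 c3 c4 c5
  have x1 : Q 0 0 1 1 = 0 := by
    linear_combination (1/4) * (a1 - a2) - (Complex.I/2) * (a3 - (a1+a2)/2) + (Q 0 0 1 1 - Q 1 1 0 0)/2 * hI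
  have x2 : Q 1 1 0 0 = 0 := by linear_combination (a1 - a2)/2 - x1
  have y1 : Q 0 1 1 0 = 0 := by
    linear_combination (1/4) * (b1 - b2) - (Complex.I/2) * (b3 - (b1+b2)/2) + (Q 0 1 1 0 - Q 1 0 0 1)/2 * hI
  have y2 : Q 1 0 0 1 = 0 := by linear_combination (b1 - b2)/2 - y1
  have x3 : Q 0 0 0 0 + Q 1 1 1 1 = k := by linear_combination (a1 + a2)/2
  have y3 : Q 0 1 0 1 + Q 1 0 1 0 = k := by linear_combination (b1 + b2)/2
  simp only [x1, x2, y1, y2] at c1 c2 c3 c4 c5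
  refine ⟨x1, ?_, ?_, by rw [x3, y3]⟩
  · linear_combination (25/12) * ((c1 - c2)/4 + (Complex.I/2) * (c3 - (c1+c2)/2)) +
      ((Q 0 0 0 1 - Q 1 0 1 1) - (Q 0 1 0 0 - Q 1 1 1 0))/2 * hI +
      Complex.I * (2/3 * Q 0 1 0 1 - 1/2 * Q 0 1 1 1 - 1/2 * Q 1 1 0 1 + 3/8 * Q 1 1 1 1) * hI
  · linear_combination (25/12) * ((c1 - c4)/4 + (Complex.I/2) * (c5 - (c1+c4)/2)) +
      ((Q 0 0 1 0 - Q 0 1 1 1) - (Q 1 0 0 0 - Q 1 1 0 1))/2 * hI +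
      Complex.I * (2/3 * Q 1 0 1 0 - 1/2 * Q 1 0 1 1 - 1/2 * Q 1 1 1 0 + 3/8 * Q 1 1 1 1) * hI

lemma exists_pair_equiv {d m : ℕ} (hm : d = 2 + m) (a b : Fin d) (hab : a ≠ b) :
    ∃ e : Fin 2 ⊕ Fin m ≃ Fin d, e (Sum.inl 0) = a ∧ e (Sum.inl 1) = b := by
  subst hm
  let e0 : Fin 2 ⊕ Fin m ≃ Fin (2 + m) := finSumFinEquiv
  let e1 := e0.trans (Equiv.swap (e0 (Sum.inl 0)) a)
  have h1 : e1 (Sum.inl 0) = a := by simp [e1]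
  have h2 : e1 (Sum.inl 1) ≠ a := by
    rw [← h1]; intro h; simpa using e1.injective h
  refine ⟨e1.trans (Equiv.swap (e1 (Sum.inl 1)) b), ?_, by simp⟩
  simp only [Equiv.trans_apply, h1]
  exact Equiv.swap_apply_of_ne_of_ne h2.symm hab

lemma qf_unitary {d : ℕ} (hd : 2 ≤ d) (Q : Fin d → Fin d → Fin d → Fin d → ℂ)
    (h : ∀ U ∈ Matrix.specialUnitaryGroup (Fin d) ℂ, qf Q U = 0)
    (U : Matrix (Fin d) (Fin d) ℂ) (hU : U * Uᴴ = 1) : qf Q U = 0 := by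
  have hdet : U.det * star U.det = 1 := by
    have := congrArg Matrix.det hU
    simpa [Matrix.det_mul, Matrix.det_conjTranspose] using this
  have hne : U.det ≠ 0 := left_ne_zero_of_mul_eq_one hdet
  obtain ⟨c, hc⟩ := IsAlgClosed.exists_pow_nat_eq (U.det)⁻¹ (show 0 < d by omega)
  have hcn : c * star c = 1 := by
    have h1 : ‖U.det‖ = 1 := by
      have := congrArg norm hdet
      rw [norm_mul, norm_star, norm_one] at this
      nlinarith [norm_nonneg U.det]
    have h2 : ‖c‖ ^ d = 1 := by rw [← norm_pow, hc, norm_inv, h1, inv_one]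
    have h3 : ‖c‖ = 1 := (pow_eq_one_iff_of_nonneg (norm_nonneg _) (by omega)).1 h2
    rw [RCLike.star_def, Complex.mul_conj, Complex.normSq_eq_norm_sq, h3]; simp
  have hmem : c • U ∈ Matrix.specialUnitaryGroup (Fin d) ℂ := by
    rw [Matrix.mem_specialUnitaryGroup_iff, Matrix.mem_unitaryGroup_iff]
    constructor
    · rw [star_smul, smul_mul_assoc, mul_smul_comm, smul_smul, hcn, one_smul]
      exact hU
    · rw [Matrix.det_smul, Fintype.card_fin, hc, inv_mul_cancel₀ hne]
  have := h _ hmem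
  rw [← this]
  unfold qf
  refine Finset.sum_congr rfl fun o _ => Finset.sum_congr rfl fun i _ =>
    Finset.sum_congr rfl fun o' _ => Finset.sum_congr rfl fun i' _ => ?_
  simp only [Matrix.smul_apply, smul_eq_mul, star_mul']
  linear_combination (-(Q o i o' i' * U o i * star (U o' i'))) * hcn

lemma qf_reindex {n n' m m' : Type*} [Fintype n] [Fintype m] [Fintype n'] [Fintype m']
    (Q : n → m → n → m → ℂ) (e : n' ≃ n) (f : m' ≃ m) (U : Matrix n' m' ℂ) :
    qf Q (U.submatrix e.symm f.symm) =
      qf (fun o i o' i' => Q (e o) (f i) (e o') (f i')) U := by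
  unfold qf
  rw [← e.sum_comp]; refine Finset.sum_congr rfl fun o _ => ?_
  rw [← f.sum_comp]; refine Finset.sum_congr rfl fun i _ => ?_
  rw [← e.sum_comp]; refine Finset.sum_congr rfl fun o' _ => ?_
  rw [← f.sum_comp]; refine Finset.sum_congr rfl fun i' _ => ?_
  simp

lemma qf_block {m : ℕ} (Q : Fin 2 ⊕ Fin m → Fin 2 ⊕ Fin m → Fin 2 ⊕ Fin m → Fin 2 ⊕ Fin m → ℂ)
    (A : Matrix (Fin 2) (Fin 2) ℂ) :
    qf Q (fromBlocks A 0 0 1) + qf Q (fromBlocks A 0 0 (-1)) =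
      2 * qf (fun o i o' i' => Q (Sum.inl o) (Sum.inl i) (Sum.inl o') (Sum.inl i')) A +
      2 * qf (fun o i o' i' => Q (Sum.inr o) (Sum.inr i) (Sum.inr o') (Sum.inr i'))
        (1 : Matrix (Fin m) (Fin m) ℂ) := by
  simp only [qf, Fintype.sum_sum_type, fromBlocks_apply₁₁, fromBlocks_apply₁₂,
    fromBlocks_apply₂₁, fromBlocks_apply₂₂, Matrix.zero_apply, Matrix.neg_apply, star_zero,
    star_neg, mul_zero, zero_mul, Finset.sum_const_zero, add_zero, zero_add, mul_neg, neg_mul,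
    Finset.sum_add_distrib, Finset.sum_neg_distrib]
  ring

lemma rel {d : ℕ} (hd : 2 ≤ d) (Q : Fin d → Fin d → Fin d → Fin d → ℂ)
    (h : ∀ U ∈ Matrix.specialUnitaryGroup (Fin d) ℂ, qf Q U = 0)
    (o o' i i' : Fin d) (ho : o ≠ o') (hi : i ≠ i') :
    Q o i o' i' = 0 ∧ Q o i o i' = Q o' i o' i' ∧ Q o i o' i = Q o i' o' i' ∧
      Q o i o i + Q o' i' o' i' = Q o i' o i' + Q o' i o' i := by
  obtain ⟨m, hm⟩ := Nat.exists_eq_add_of_le hd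
  obtain ⟨e, e0, e1⟩ := exists_pair_equiv hm o o' ho
  obtain ⟨f, f0, f1⟩ := exists_pair_equiv hm i i' hi
  have key := two_rel (fun a b a' b' => Q (e (Sum.inl a)) (f (Sum.inl b)) (e (Sum.inl a')) (f (Sum.inl b')))
    (-qf (fun o i o' i' => Q (e (Sum.inr o)) (f (Sum.inr i)) (e (Sum.inr o')) (f (Sum.inr i')))
        (1 : Matrix (Fin m) (Fin m) ℂ)) ?_
  · simpa only [e0, e1, f0, f1] using key
  · intro A hA
    have gen : ∀ B : Matrix (Fin m) (Fin m) ℂ, B * Bᴴ = 1 →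
        qf (fun o i o' i' => Q (e o) (f i) (e o') (f i')) (fromBlocks A 0 0 B) = 0 := by
      intro B hB
      rw [← qf_reindex]
      apply qf_unitary hd Q h
      rw [Matrix.conjTranspose_submatrix, Matrix.submatrix_mul_equiv, fromBlocks_conjTranspose,
        fromBlocks_multiply]
      simp [hA, hB, fromBlocks_one]
    have := qf_block (fun o i o' i' => Q (e o) (f i) (e o') (f i')) A
    rw [gen 1 (by simp), gen (-1) (by simp)] at this
    linear_combination (-1/2) * this

lemma structure_lemma {d : ℕ} (hd : 2 ≤ d) (Q : Fin d → Fin d → Fin d → Fin d → ℂ)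
    (h : ∀ U ∈ Matrix.specialUnitaryGroup (Fin d) ℂ, qf Q U = 0) :
    ∃ s t : Fin d → Fin d → ℂ, ∀ o i o' i', Q o i o' i' =
      (if o = o' then s i i' else 0) + (if i = i' then t o o' else 0) := by
  have R := rel hd Q h
  let z : Fin d := ⟨0, by omega⟩
  refine ⟨fun i i' => Q z i z i', fun o o' => Q o z o' z - if o = o' then Q z z z z else 0, ?_⟩
  intro o i o' i'
  by_cases ho : o = o' <;> by_cases hi : i = i'
  · subst ho; subst hi
    simp only [if_true]
    by_cases h1 : o = z
    · rw [h1]; ring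
    by_cases h2 : i = z
    · rw [h2]; ring
    linear_combination (R o z i z h1 h2).2.2.2
  · subst ho
    simp only [if_true, hi, if_false, add_zero]
    by_cases h1 : o = z
    · rw [h1]
    exact (R o z i i' h1 hi).2.1
  · subst hi
    simp only [if_true, ho, if_false, zero_add, sub_zero]
    by_cases h2 : i = z
    · rw [h2]
    exact (R o o' i z ho h2).2.2.1
  · simp [ho, hi, (R o o' i i' ho hi).1]


lemma mop_psd {d : ℕ} (X : Matrix (Fin d) (Fin d) ℂ) (hX : X.PosSemidef) (ε : ℂ)
    (h1 : ε * ε = 1) (h2 : star ε = ε) : (mop X ε).PosSemidef := by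
  let SW : Matrix (Fin d × Fin d) (Fin d × Fin d) ℂ := (1 : Matrix _ _ ℂ).submatrix id Prod.swap
  have hs : SW * SW = 1 := by
    ext p q
    simp only [SW, Matrix.mul_apply, Matrix.submatrix_apply, Matrix.one_apply, id]
    rw [Finset.sum_eq_single p.swap]
    · simp
    · intro b _ hb
      rw [if_neg, zero_mul]
      intro h
      apply hb
      rw [h]; simp
    · simp
  have hh : SWᴴ = SW := by
    ext p q
    simp only [SW, Matrix.conjTranspose_apply, Matrix.submatrix_apply, Matrix.one_apply, id]
    by_cases h : q = p.swap
    · rw [if_pos h, if_pos (by rw [h]; simp)]; simp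
    · rw [if_neg h, if_neg (by intro h'; apply h; rw [h']; simp)]; simp
  have hN : (1 + ε • SW).PosSemidef := by
    have : (1 + ε • SW) = (1/2 : ℝ) • ((1 + ε • SW)ᴴ * (1 + ε • SW)) := by
      rw [Matrix.conjTranspose_add, Matrix.conjTranspose_smul, hh, h2, Matrix.conjTranspose_one]
      rw [add_mul, mul_add, mul_add, smul_mul_smul_comm, h1, hs]
      simp only [one_mul, mul_one, one_smul]
      ext p q
      simp
      ring
    rw [this]
    exact (Matrix.posSemidef_conjTranspose_mul_self _).smul (by norm_num)
  have hK := hX.kronecker hN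
  have : mop X ε = (X ⊗ₖ (1 + ε • SW)).submatrix
      (fun p : (Fin d × Fin d) × Fin d => (p.1.1, (p.1.2, p.2)))
      (fun p : (Fin d × Fin d) × Fin d => (p.1.1, (p.1.2, p.2))) := by
    ext ⟨⟨i, o⟩, f⟩ ⟨⟨i', o'⟩, f'⟩
    simp only [mop, Matrix.submatrix_apply, Matrix.kroneckerMap_apply, Matrix.add_apply,
      Matrix.smul_apply, SW, Matrix.one_apply, id, Prod.swap, Prod.mk.injEq, smul_eq_mul]
    congr 2
    · split_ifs <;> simp_all
    · split_ifs <;> simp_all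
  rw [this]
  exact hK.submatrix _

lemma trace_psd {n : Type*} [Fintype n] [DecidableEq n] (S M : Matrix n n ℂ)
    (hS : S.PosSemidef) (hM : M.PosSemidef) : 0 ≤ (S * M).trace := by
  obtain ⟨m, v, rfl⟩ := Matrix.posSemidef_iff_eq_sum_vecMulVec.1 hM
  rw [Finset.mul_sum, Matrix.trace_sum]
  refine Finset.sum_nonneg fun i _ => ?_
  rw [Matrix.mul_vecMulVec, Matrix.trace_vecMulVec, dotProduct_comm]
  exact hS.dotProduct_mulVec_nonneg (v i)

lemma trace_mop {d : ℕ} (S : Matrix ((Fin d × Fin d) × Fin d) ((Fin d × Fin d) × Fin d) ℂ)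
    (X : Matrix (Fin d) (Fin d) ℂ) (ε : ℂ) :
    (S * mop X ε).trace =
      ∑ i, ∑ i', X i' i * (∑ o, ∑ f, S ((i, o), f) ((i', o), f)) +
      ε * ∑ i, ∑ i', X i' i * (∑ o, ∑ f, S ((i, o), f) ((i', f), o)) := by
  simp only [Matrix.trace, Matrix.diag_apply, Matrix.mul_apply, mop, Fintype.sum_prod_type]
  rw [Finset.mul_sum, ← Finset.sum_add_distrib]
  refine Finset.sum_congr rfl fun i _ => ?_
  have : ∀ o f, ∑ i', ∑ o', ∑ f', S ((i, o), f) ((i', o'), f') *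
      (X i' i * ((if o' = o then 1 else 0) * (if f' = f then 1 else 0) +
        ε * ((if o' = f then 1 else 0) * (if f' = o then 1 else 0)))) =
      ∑ i', (X i' i * S ((i, o), f) ((i', o), f) + ε * (X i' i * S ((i, o), f) ((i', f), o))) := by
    intro o f
    refine Finset.sum_congr rfl fun i' _ => ?_
    have : ∀ o' f', S ((i, o), f) ((i', o'), f') *
      (X i' i * ((if o' = o then 1 else 0) * (if f' = f then 1 else 0) +
        ε * ((if o' = f then 1 else 0) * (if f' = o then 1 else 0)))) =
      (if f' = f then (if o' = o then X i' i * S ((i, o), f) ((i', o'), f') else 0) else 0) +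
      (if f' = o then (if o' = f then ε * (X i' i * S ((i, o), f) ((i', o'), f')) else 0) else 0) := by
      intro o' f'
      split_ifs <;> ring
    simp only [this, Finset.sum_add_distrib, Finset.sum_ite_eq', Finset.mem_univ, if_true]
  simp only [this]
  rw [Finset.mul_sum, ← Finset.sum_add_distrib]
  simp only [Finset.mul_sum, ← Finset.sum_add_distrib]
  rw [Finset.sum_congr rfl fun o _ => Finset.sum_comm]
  rw [Finset.sum_comm]

lemma act_eq {d : ℕ} (S : Matrix ((Fin d × Fin d) × Fin d) ((Fin d × Fin d) × Fin d) ℂ)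
    (U : Matrix (Fin d) (Fin d) ℂ) (f f' : Fin d) :
    act S U f f' = qf (fun o i o' i' => S ((i, o), f) ((i', o'), f')) U := by
  simp only [act, ptrLeft, choiProj, outer, choiVec, mconj, qf, Matrix.mul_apply,
    Fintype.sum_prod_type, Matrix.kroneckerMap_apply, Matrix.vecMulVec_apply, Matrix.map_apply,
    Pi.star_apply, Matrix.one_apply]
  rw [Finset.sum_comm]
  refine Finset.sum_congr rfl fun o _ => Finset.sum_congr rfl fun i _ => ?_
  rw [Finset.sum_comm]
  refine Finset.sum_congr rfl fun o' _ => Finset.sum_congr rfl fun i' _ => ?_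
  simp
  left
  ring

lemma act_mop {d : ℕ} (X : Matrix (Fin d) (Fin d) ℂ) (ε : ℂ) (U : Matrix (Fin d) (Fin d) ℂ)
    (hU : Uᴴ * U = 1) :
    act (mop X ε) U = X.trace • (1 : Matrix (Fin d) (Fin d) ℂ) + ε • (mconj U * Xᵀ * Uᵀ) := by
  have hU' : ∀ i i', ∑ o, U o i * star (U o i') = if i = i' then 1 else 0 := by
    intro i i'
    have := congrFun (congrFun hU i') i
    simp only [Matrix.mul_apply, Matrix.conjTranspose_apply, Matrix.one_apply] at this
    rw [Finset.sum_congr rfl fun o _ => mul_comm _ _, this]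
    simp [eq_comm]
  ext f f'
  rw [act_eq]
  simp only [qf, mop]
  have h1 : ∀ o i o' i', X i i' * ((if o = o' then 1 else 0) * (if f = f' then 1 else 0) +
        ε * ((if o = f' then 1 else 0) * (if f = o' then 1 else 0))) * (U o i * star (U o' i')) =
      (if o = o' then (if f = f' then X i i' * (U o i * star (U o' i')) else 0) else 0) +
      (if o = f' then (if f = o' then ε * (star (U o' i') * X i i' * U o i) else 0) else 0) := by
      intro o i o' i'
      split_ifs <;> ring
  simp only [h1, Finset.sum_add_distrib]
  congr 1
  · have : ∀ o i, ∑ o', ∑ i', (if o = o' then (if f = f' then X i i' * (U o i * star (U o' i')) else 0) else 0)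
        = ∑ i', (if f = f' then X i i' * (U o i * star (U o i')) else 0) := by
      intro o i
      rw [Finset.sum_comm]
      simp
    simp only [this]
    rw [Finset.sum_comm]
    rw [Finset.sum_congr rfl fun i _ => Finset.sum_comm]
    by_cases hf : f = f'
    · simp only [hf, if_true, ← Finset.mul_sum, hU']
      simp [Matrix.trace]
    · simp [hf]
  · have : ∀ o i, ∑ o', ∑ i', (if o = f' then (if f = o' then ε * (star (U o' i') * X i i' * U o i) else 0) else 0)
        = if o = f' then ∑ i', ε * (star (U f i') * X i i' * U o i) else 0 := by
      intro o i
      rw [Finset.sum_comm]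
      split_ifs <;> simp
    simp only [this]
    rw [Finset.sum_comm]
    simp [Matrix.mul_apply, Finset.mul_sum, mconj, Finset.sum_mul]

lemma ptr_mop {d : ℕ} (X : Matrix (Fin d) (Fin d) ℂ) (ε : ℂ) :
    ptrRight (mop X ε) = ((d + ε) • X) ⊗ₖ (1 : Matrix (Fin d) (Fin d) ℂ) := by
  ext ⟨i, o⟩ ⟨i', o'⟩
  simp only [ptrRight, mop, Matrix.kroneckerMap_apply, Matrix.smul_apply, Matrix.one_apply,
    smul_eq_mul]
  by_cases h : o = o'
  · subst h
    simp [Finset.sum_add_distrib, ← Finset.mul_sum]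
    ring
  · have : ∀ f : Fin d, ¬ (o = f ∧ f = o') := by rintro f ⟨h1, h2⟩; exact h (h1.trans h2)
    simp [h]

lemma outer_psd {d : ℕ} (v : Fin d → ℂ) : (outer v).PosSemidef :=
  Matrix.posSemidef_vecMulVec_self_star v

lemma one_sub_outer_psd_s11 {d : ℕ} (v : Fin d → ℂ) (hv : star v ⬝ᵥ v = 1) :
    (1 - outer v).PosSemidef := by
  have h1 : (outer v)ᴴ = outer v := (outer_psd v).1
  have h2 : outer v * outer v = outer v := by
    simp [outer, Matrix.vecMulVec_mul_vecMulVec, hv]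
  have : 1 - outer v = (1 - outer v)ᴴ * (1 - outer v) := by
    rw [Matrix.conjTranspose_sub, h1, Matrix.conjTranspose_one, sub_mul, mul_sub, mul_sub, h2]
    simp
  rw [this]
  exact Matrix.posSemidef_conjTranspose_mul_self _

lemma outer_trace {d : ℕ} (v : Fin d → ℂ) (hv : star v ⬝ᵥ v = 1) : (outer v).trace = 1 := by
  rw [outer, Matrix.trace_vecMulVec, dotProduct_comm, hv]

lemma nec_struct {d : ℕ} (hd : 2 ≤ d)
    (S : Matrix ((Fin d × Fin d) × Fin d) ((Fin d × Fin d) × Fin d) ℂ)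
    (σ ρ : Matrix (Fin d) (Fin d) ℂ)
    (hσ : ptrRight S = σ ⊗ₖ (1 : Matrix (Fin d) (Fin d) ℂ))
    (hact : ∀ U : Matrix (Fin d) (Fin d) ℂ, U ∈ Matrix.specialUnitaryGroup (Fin d) ℂ →
      act S U = mconj U * ρ * Uᵀ) :
    ∃ c : ℂ, ∀ (X : Matrix (Fin d) (Fin d) ℂ) (ε : ℂ), (S * mop X ε).trace =
      d * (X * σ).trace + ε * (X * (((d : ℂ)^2 - 1) • ρᵀ + σ + c • 1)).trace := by
  have hst : ∀ f f' : Fin d, ∃ s t : Fin d → Fin d → ℂ, ∀ o i o' i',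
      S ((i, o), f) ((i', o'), f') - (if o = f' then (if o' = f then ρ i' i else 0) else 0) =
      (if o = o' then s i i' else 0) + (if i = i' then t o o' else 0) := by
    intro f f'
    apply structure_lemma hd
      (fun o i o' i' => S ((i, o), f) ((i', o'), f') - (if o = f' then (if o' = f then ρ i' i else 0) else 0))
    intro U hU
    have h1 := congrFun (congrFun (hact U hU) f) f'
    rw [act_eq] at h1
    have h2 : qf (fun o i o' i' => (if o = f' then (if o' = f then ρ i' i else 0) else 0)) U =
        (mconj U * ρ * Uᵀ) f f' := by
      have : ∀ o i o' i', (if o = f' then (if o' = f then ρ i' i else 0) else 0) *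
          (U o i * star (U o' i')) =
          (if o = f' then (if o' = f then (star (U o' i') * ρ i' i * U o i) else 0) else 0) := by
        intro o i o' i'
        split_ifs <;> ring
      simp only [qf, this]
      have : ∀ o i, ∑ o', ∑ i', (if o = f' then (if o' = f then (star (U o' i') * ρ i' i * U o i) else 0) else 0)
          = if o = f' then ∑ i', (star (U f i') * ρ i' i * U o i) else 0 := by
        intro o i
        rw [Finset.sum_comm]
        split_ifs <;> simp
      simp only [this]
      rw [Finset.sum_comm]
      simp [Matrix.mul_apply, mconj, Finset.sum_mul]
    have h3 := h1.trans h2.symm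
    unfold qf at h3 ⊢
    simp only [sub_mul, Finset.sum_sub_distrib]
    rw [h3, sub_self]
  choose s t hS using hst
  have hS' : ∀ f f' o i o' i', S ((i, o), f) ((i', o'), f') =
      (if o = f' then (if o' = f then ρ i' i else 0) else 0) +
      ((if o = o' then s f f' i i' else 0) + (if i = i' then t f f' o o' else 0)) := by
    intro f f' o i o' i'
    rw [← hS f f' o i o' i']; ring
  have hσ' : ∀ i i' o, ∑ f, S ((i, o), f) ((i', o), f) = σ i i' := by
    intro i i' o
    have := congrFun (congrFun hσ (i, o)) (i', o)
    simpa [ptrRight] using this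
  let z : Fin d := ⟨0, by omega⟩
  refine ⟨∑ o, ∑ f, t f o o f - ∑ f, t f f z z, ?_⟩
  have hG : ∀ i i', ∑ o, ∑ f, S ((i, o), f) ((i', f), o) =
      (((d : ℂ)^2 - 1) • ρᵀ + σ + (∑ o, ∑ f, t f o o f - ∑ f, t f f z z) •
        (1 : Matrix (Fin d) (Fin d) ℂ)) i i' := by
    intro i i'
    have h1 := hσ' i i' z
    simp only [hS'] at h1 ⊢
    have e : ∀ f : Fin d, (if z = f then (if z = f then ρ i' i else 0) else 0) =
        (if z = f then ρ i' i else 0) := by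
      intro f; split_ifs <;> rfl
    simp only [e, if_true, Finset.sum_add_distrib, Finset.sum_ite_eq, Finset.mem_univ] at h1 ⊢
    simp only [Finset.sum_const, Finset.card_univ, Fintype.card_fin, nsmul_eq_mul,
      Matrix.add_apply, Matrix.smul_apply, Matrix.transpose_apply, smul_eq_mul, Matrix.one_apply]
    rw [← h1]
    split_ifs <;> simp <;> ring
  intro X ε
  rw [trace_mop]
  simp only [hG, hσ', Finset.sum_const, Finset.card_univ, Fintype.card_fin, nsmul_eq_mul]
  congr 1
  · rw [Finset.sum_comm]
    simp only [Matrix.trace, Matrix.diag_apply, Matrix.mul_apply, Finset.mul_sum]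
    refine Finset.sum_congr rfl fun i _ => Finset.sum_congr rfl fun i' _ => ?_
    ring
  · rw [Finset.sum_comm]
    simp only [Matrix.trace, Matrix.diag_apply, Matrix.mul_apply]

lemma nec {d : ℕ} (hd : 3 ≤ d) (ψ : Fin d → ℂ) (hψ : star ψ ⬝ᵥ ψ = 1) (η : ℝ)
    (S : Matrix ((Fin d × Fin d) × Fin d) ((Fin d × Fin d) × Fin d) ℂ) (hS : IsSuperchannel S)
    (hact : ∀ U : Matrix (Fin d) (Fin d) ℂ, U ∈ Matrix.specialUnitaryGroup (Fin d) ℂ →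
      act S U = mconj U * ((η : ℂ) • outer ψ +
        (((1 - η) / d : ℝ) : ℂ) • (1 : Matrix (Fin d) (Fin d) ℂ)) * Uᵀ) :
    η ≤ 1 / ((d : ℝ) + 1) := by
  obtain ⟨hpsd, σ, -, htr, hσ⟩ := hS
  obtain ⟨c, hc⟩ := nec_struct (by omega) S σ _ hσ hact
  have hψ' : star (star ψ) ⬝ᵥ star ψ = 1 := by
    rw [star_star, dotProduct_comm]; exact hψ
  have hd0 : (d : ℂ) ≠ 0 := by
    have : d ≠ 0 := by omega
    exact_mod_cast this
  have hdr : (3 : ℝ) ≤ d := by exact_mod_cast hd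
  have hX : (outer ψ)ᵀ = outer (star ψ) := by
    ext i j; simp [outer, Matrix.vecMulVec_apply, mul_comm]
  have hX2 : outer (star ψ) * outer (star ψ) = outer (star ψ) := by
    simp only [outer, Matrix.vecMulVec_mul_vecMulVec, hψ', one_smul]
  have hXt := outer_trace (star ψ) hψ'
  have hone : ((1 : Matrix (Fin d) (Fin d) ℂ)).trace = d := by simp
  have hp := trace_psd _ _ hpsd (mop_psd (1 - outer (star ψ)) (one_sub_outer_psd_s11 _ hψ') 1
    (by simp) (by simp))
  have hm := trace_psd _ _ hpsd (mop_psd 1 Matrix.PosSemidef.one (-1) (by simp) (by simp))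
  have hq := trace_psd _ _ hpsd (mop_psd (outer (star ψ)) (outer_psd _) (-1) (by simp) (by simp))
  rw [hc] at hp hm hq
  rw [Matrix.transpose_add, Matrix.transpose_smul, Matrix.transpose_smul, hX,
    Matrix.transpose_one] at hp hm hq
  simp only [mul_add, sub_mul, one_mul, mul_smul_comm, mul_one, hX2, Matrix.trace_add,
    Matrix.trace_sub, Matrix.trace_smul, hXt, htr, hone, smul_eq_mul, smul_add, smul_sub] at hp hm hq
  set a := (outer (star ψ) * σ).trace
  have e : ∀ P M R : ℂ, 0 ≤ P → 0 ≤ M → 0 ≤ R →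
      0 ≤ (((d : ℝ) - 1 : ℝ) : ℂ) * P + (((d : ℝ) - 3 : ℝ) : ℂ) * M + (((d : ℝ) + 1 : ℝ) : ℂ) * R := by
    intro P M R h1 h2 h3
    have k1 : (0 : ℂ) ≤ (((d : ℝ) - 1 : ℝ) : ℂ) := Complex.zero_le_real.2 (by linarith)
    have k2 : (0 : ℂ) ≤ (((d : ℝ) - 3 : ℝ) : ℂ) := Complex.zero_le_real.2 (by linarith)
    have k3 : (0 : ℂ) ≤ (((d : ℝ) + 1 : ℝ) : ℂ) := Complex.zero_le_real.2 (by linarith)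
    exact add_nonneg (add_nonneg (mul_nonneg k1 h1) (mul_nonneg k2 h2)) (mul_nonneg k3 h3)
  have key := e _ _ _ hp hm hq
  have fin : (0 : ℂ) ≤ ((2 * ((d : ℝ) - 1)^2 - 2 * ((d : ℝ)^2 - 1) * ((d : ℝ) - 1) * η : ℝ) : ℂ) := by
    refine key.trans_eq ?_
    push_cast
    field_simp
    ring
  rw [Complex.zero_le_real] at fin
  rw [le_div_iff₀ (by linarith)]
  have : 0 ≤ 2 * ((d : ℝ) - 1)^2 * (1 - η * (d + 1)) := by nlinarith
  have h4 : (0:ℝ) < 2 * ((d : ℝ) - 1)^2 := by nlinarith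
  have := nonneg_of_mul_nonneg_right this h4
  linarith

lemma act_lin {d : ℕ} (S T : Matrix ((Fin d × Fin d) × Fin d) ((Fin d × Fin d) × Fin d) ℂ)
    (a b : ℂ) (U : Matrix (Fin d) (Fin d) ℂ) :
    act (a • S + b • T) U = a • act S U + b • act T U := by
  ext f f'
  simp only [act, ptrLeft, add_mul, smul_mul_assoc, Matrix.add_apply, Matrix.smul_apply,
    Finset.sum_add_distrib, smul_eq_mul, Finset.mul_sum]

lemma ptr_lin {d : ℕ} (S T : Matrix ((Fin d × Fin d) × Fin d) ((Fin d × Fin d) × Fin d) ℂ)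
    (a b : ℂ) : ptrRight (a • S + b • T) = a • ptrRight S + b • ptrRight T := by
  ext f f'
  simp only [ptrRight, Matrix.add_apply, Matrix.smul_apply,
    Finset.sum_add_distrib, smul_eq_mul, Finset.mul_sum]

lemma mop_one_zero {d : ℕ} : mop (1 : Matrix (Fin d) (Fin d) ℂ) 0 = 1 := by
  ext ⟨⟨i, o⟩, f⟩ ⟨⟨i', o'⟩, f'⟩
  simp only [mop, Matrix.one_apply, Prod.mk.injEq]
  split_ifs <;> simp_all

lemma conj_unitary {d : ℕ} (U : Matrix (Fin d) (Fin d) ℂ)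
    (hU : U ∈ Matrix.specialUnitaryGroup (Fin d) ℂ) :
    Uᴴ * U = 1 ∧ mconj U * Uᵀ = 1 := by
  have h := (Matrix.mem_specialUnitaryGroup_iff.1 hU).1
  refine ⟨Matrix.mem_unitaryGroup_iff'.1 h, ?_⟩
  have h1 : U * Uᴴ = 1 := Matrix.mem_unitaryGroup_iff.1 h
  have h2 := congrArg Matrix.transpose h1
  rw [Matrix.transpose_mul, Matrix.transpose_one] at h2
  exact h2

lemma suff_two (ψ : Fin 2 → ℂ) (hψ : star ψ ⬝ᵥ ψ = 1) (η : ℝ) (hη : η ∈ Set.Icc (0 : ℝ) 1) :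
    ∃ S : Matrix ((Fin 2 × Fin 2) × Fin 2) ((Fin 2 × Fin 2) × Fin 2) ℂ,
      IsSuperchannel S ∧
      ∀ U : Matrix (Fin 2) (Fin 2) ℂ, U ∈ Matrix.specialUnitaryGroup (Fin 2) ℂ →
        act S U = mconj U * ((η : ℂ) • outer ψ +
          (((1 - η) / (2 : ℕ) : ℝ) : ℂ) • (1 : Matrix (Fin 2) (Fin 2) ℂ)) * Uᵀ := by
  have hψ' : star (star ψ) ⬝ᵥ star ψ = 1 := by
    rw [star_star, dotProduct_comm]; exact hψ
  have hXT : (outer (star ψ))ᵀ = outer ψ := by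
    ext i j; simp [outer, Matrix.vecMulVec_apply, mul_comm]
  let X : Matrix (Fin 2) (Fin 2) ℂ := (η : ℂ) • (1 - outer (star ψ)) + (((1 - η) / 2 : ℝ) : ℂ) • 1
  have hX : X.PosSemidef :=
    ((one_sub_outer_psd_s11 _ hψ').smul (Complex.zero_le_real.2 hη.1)).add
      (Matrix.PosSemidef.one.smul (Complex.zero_le_real.2 (by linarith [hη.2])))
  have htr : X.trace = 1 := by
    simp only [X, Matrix.trace_add, Matrix.trace_smul, Matrix.trace_sub, outer_trace _ hψ',
      Matrix.trace_one, Fintype.card_fin, smul_eq_mul]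
    push_cast; ring
  refine ⟨mop X (-1), ⟨mop_psd X hX (-1) (by simp) (by simp), X, hX, htr, ?_⟩, ?_⟩
  · rw [ptr_mop]; norm_num
  · intro U hU
    obtain ⟨h1, h2⟩ := conj_unitary U hU
    rw [act_mop _ _ _ h1, htr]
    simp only [X, Matrix.transpose_add, Matrix.transpose_smul, Matrix.transpose_sub,
      Matrix.transpose_one, hXT, mul_add, add_mul, mul_sub, sub_mul, mul_smul_comm,
      smul_mul_assoc, mul_one, h2]
    push_cast
    module

lemma suff_small {d : ℕ} (hd : 2 ≤ d) (ψ : Fin d → ℂ) (hψ : star ψ ⬝ᵥ ψ = 1) (η : ℝ)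
    (hη : 0 ≤ η) (hη' : η ≤ 1 / ((d : ℝ) + 1)) :
    ∃ S : Matrix ((Fin d × Fin d) × Fin d) ((Fin d × Fin d) × Fin d) ℂ,
      IsSuperchannel S ∧
      ∀ U : Matrix (Fin d) (Fin d) ℂ, U ∈ Matrix.specialUnitaryGroup (Fin d) ℂ →
        act S U = mconj U * ((η : ℂ) • outer ψ +
          (((1 - η) / d : ℝ) : ℂ) • (1 : Matrix (Fin d) (Fin d) ℂ)) * Uᵀ := by
  have hψ' : star (star ψ) ⬝ᵥ star ψ = 1 := by
    rw [star_star, dotProduct_comm]; exact hψ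
  have hXT : (outer (star ψ))ᵀ = outer ψ := by
    ext i j; simp [outer, Matrix.vecMulVec_apply, mul_comm]
  have hdr : (2 : ℝ) ≤ d := by exact_mod_cast hd
  have hd0 : (d : ℂ) ≠ 0 := by
    have : d ≠ 0 := by omega
    exact_mod_cast this
  let b : ℝ := (1 - η) / d - η
  have hb : 0 ≤ b := by
    rw [le_div_iff₀ (by linarith)] at hη'
    have : η ≤ (1 - η) / d := by
      rw [le_div_iff₀ (by linarith)]; linarith
    simp only [b]; linarith
  have hbd : 0 ≤ b / d := div_nonneg hb (by linarith)
  have hη0 : (0 : ℂ) ≤ (η : ℂ) := Complex.zero_le_real.2 hη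
  let σ : Matrix (Fin d) (Fin d) ℂ := ((η * (d + 1) : ℝ) : ℂ) • outer (star ψ) + (b : ℂ) • 1
  refine ⟨(η : ℂ) • mop (outer (star ψ)) 1 + ((b / d : ℝ) : ℂ) • mop 1 0, ⟨?_, σ, ?_, ?_, ?_⟩, ?_⟩
  · apply Matrix.PosSemidef.add
    · exact (mop_psd _ (outer_psd _) 1 (by simp) (by simp)).smul hη0
    · rw [mop_one_zero]
      exact Matrix.PosSemidef.one.smul (Complex.zero_le_real.2 hbd)
  · exact ((outer_psd _).smul (Complex.zero_le_real.2 (by positivity))).add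
      (Matrix.PosSemidef.one.smul (Complex.zero_le_real.2 hb))
  · simp only [σ, Matrix.trace_add, Matrix.trace_smul, outer_trace _ hψ',
      Matrix.trace_one, Fintype.card_fin, smul_eq_mul, b]
    push_cast
    field_simp
    ring
  · rw [ptr_lin, ptr_mop, ptr_mop, ← Matrix.smul_kronecker, ← Matrix.smul_kronecker,
      ← Matrix.add_kronecker]
    congr 1
    simp only [σ, smul_smul]
    push_cast
    congr 2
    field_simp
    ring
  · intro U hU
    obtain ⟨h1, h2⟩ := conj_unitary U hU
    rw [act_lin, act_mop _ _ _ h1, act_mop _ _ _ h1, outer_trace _ hψ', hXT]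
    simp only [mul_add, add_mul, mul_smul_comm, smul_mul_assoc, mul_one, h2,
      Matrix.trace_one, Fintype.card_fin, zero_smul, add_zero, one_smul, smul_add, smul_smul]
    have : (((1 - η) / d : ℝ) : ℂ) = (η : ℂ) + ((b / d : ℝ) : ℂ) * d := by
      simp only [b]; push_cast; field_simp; ring
    rw [this]
    module

/-- **Deterministic exact unitary complex conjugation on a known mixed state.** With `ρ = η|ψ⟩⟨ψ| + ((1−η)/d)·1`, a single-call deterministic superchannel implementing `U ↦ U̅ ρ Uᵀ` for all `U ∈ SU(d)` exists iff `d = 2` or `η ≤ 1/(d+1)`. -/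
theorem mixed_state_deterministic_exact_conjugation
    (d : ℕ) (hd : 2 ≤ d) (ψ : Fin d → ℂ) (hψ : star ψ ⬝ᵥ ψ = 1)
    (η : ℝ) (hη : η ∈ Set.Icc (0 : ℝ) 1) :
    (∃ S : Matrix ((Fin d × Fin d) × Fin d) ((Fin d × Fin d) × Fin d) ℂ,
        IsSuperchannel S ∧
        ∀ U : Matrix (Fin d) (Fin d) ℂ, U ∈ Matrix.specialUnitaryGroup (Fin d) ℂ →
          act S U =
            mconj U * ((η : ℂ) • outer ψ + (((1 - η) / d : ℝ) : ℂ) • (1 : Matrix (Fin d) (Fin d) ℂ)) * Uᵀ) ↔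
      (d = 2 ∨ η ≤ 1 / ((d : ℝ) + 1)) := by
  constructor
  · rintro ⟨S, hS, hact⟩
    by_cases h2 : d = 2
    · exact Or.inl h2
    · exact Or.inr (nec (by omega) ψ hψ η S hS hact)
  · rintro (h | h)
    · subst h
      exact suff_two ψ hψ η hη
    · exact suff_small hd ψ hψ η hη.1 h
end
end
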